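/- arXiv:2501.05968 — 4 statements merged into one kernel-verified Lean document; each statement's English description precedes it below -/
import Mathlib

section
/- Let D be an oriented graph on n vertices with minimum degree δ satisfying 1 < δ < n/2, and suppose d(u) + d(v) ≥ n + δ − 2 for every pair of non-adjacent vertices u and v. Then D contains a Hamilton oriented cycle C with σ_max(C) ≥ n − δ. -/
/-- A digraph given by the arc relation `A` is an oriented graph: no loops and at most
one arc between any two vertices. -/
def IsOriented {V : Type*} (A : V → V → Prop) : Prop :=
  ∀ u v, A u v → u ≠ v ∧ ¬ A v u

/-- The degree of `v` in the underlying graph of the digraph `A`. -/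
noncomputable def deg {V : Type*} [Fintype V] (A : V → V → Prop) (v : V) : ℕ :=
  Nat.card {u : V // A v u ∨ A u v}

/-- `e` lists the vertices of a Hamilton oriented cycle of the digraph `A`:
consecutive vertices are joined by an arc in one of the two directions. -/
def IsHamOrientedCycle {V : Type*} [Fintype V] (A : V → V → Prop)
    (e : ZMod (Fintype.card V) ≃ V) : Prop :=
  ∀ i, A (e i) (e (i + 1)) ∨ A (e (i + 1)) (e i)

/-- The number of forward arcs of the oriented cycle listed by `e`. -/
noncomputable def sigmaPlus {V : Type*} [Fintype V] (A : V → V → Prop)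
    (e : ZMod (Fintype.card V) ≃ V) : ℕ :=
  Nat.card {i : ZMod (Fintype.card V) // A (e i) (e (i + 1))}

/-- The number of backward arcs of the oriented cycle listed by `e`. -/
noncomputable def sigmaMinus {V : Type*} [Fintype V] (A : V → V → Prop)
    (e : ZMod (Fintype.card V) ≃ V) : ℕ :=
  Nat.card {i : ZMod (Fintype.card V) // A (e (i + 1)) (e i)}

/-- `σ_max` of the oriented cycle listed by `e`. -/
noncomputable def sigmaMax {V : Type*} [Fintype V] (A : V → V → Prop)
    (e : ZMod (Fintype.card V) ≃ V) : ℕ :=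
  max (sigmaPlus A e) (sigmaMinus A e)

/-!
Let `v` have minimum degree, `N` its set of neighbours and `W` the set of the remaining vertices.
The degree condition forces every `w ∈ W` to be adjacent to all vertices but `v`. Hence `W` is
semicomplete, and by Rédei's theorem it has a cyclic order `σ` with at most one backward step.
Choose `x, y ∈ N`. Splitting `w → σ w` by the detour `x, v, y` for one `w ∈ W`, and by single
vertices of `N \ {x, y}` for others, gives a Hamilton oriented cycle. Now average over the `#W`
possible starting points. A nonempty detour of `k` vertices, summed over all its positions,
yields together with its reversal at least `(k + 1) * #W` forward arcs. A single vertex is its own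
reversal, and the orientation of `x, v, y` may be chosen, so the average number of forward arcs
on the cycle exceeds `#W = n - δ - 1`.
-/

open Finset Relation

section Redei

variable {α : Type*} {r : α → α → Prop}

lemma isChain_orderedInsert [DecidableRel r] {a : α} {l : List α} (hl : l.IsChain r)
    (ha : ∀ b ∈ l, SymmGen r a b) : (l.orderedInsert r a).IsChain r := by
  induction l with
  | nil => simp
  | cons b l ih =>
    rw [List.orderedInsert_cons]
    split_ifs with hab
    · exact hl.cons_cons hab
    · have hba : r b a := (ha b List.mem_cons_self).resolve_left hab
      have ih := ih hl.tail fun c hc => ha c (List.mem_cons_of_mem _ hc)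
      cases l with
      | nil => simpa using hba
      | cons c l =>
        rw [List.orderedInsert_cons] at ih ⊢
        split_ifs at ih ⊢
        · exact ih.cons_cons hba
        · exact ih.cons_cons (List.isChain_cons_cons.1 hl).1

-- Insertion compares adjacent entries only, so totality suffices: `r` need not be transitive.
lemma isChain_insertionSort [DecidableRel r] {l : List α} (hl : l.Pairwise (SymmGen r)) :
    (l.insertionSort r).IsChain r := by
  induction l with
  | nil => simp
  | cons a l ih =>
    obtain ⟨ha, hl⟩ := List.pairwise_cons.1 hl
    exact isChain_orderedInsert (ih hl) fun b hb => ha b ((List.mem_insertionSort r).1 hb)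

lemma rel_formPerm_of_mem_dropLast [DecidableEq α] {l : List α} (hl : l.Nodup)
    (hr : l.IsChain r) {a : α} (ha : a ∈ l.dropLast) : r a (l.formPerm a) := by
  obtain ⟨i, hi, rfl⟩ := List.getElem_of_mem ha
  have hi' : i + 1 < l.length := by grind
  rw [List.getElem_dropLast, List.formPerm_apply_lt_getElem _ hl _ hi']
  exact List.isChain_iff_getElem.1 hr i hi'

end Redei

section ArcCount

variable {V : Type*} {A : V → V → Prop}

open Classical in
/-- The number of forward arcs met when the vertices of a list are visited in order. -/
noncomputable def arcCount (A : V → V → Prop) : List V → ℕ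
  | a :: b :: l => (if A a b then 1 else 0) + arcCount A (b :: l)
  | _ => 0

lemma arcCount_append_cons (l₁ l₂ : List V) (a : V) :
    arcCount A (l₁ ++ a :: l₂) = arcCount A (l₁ ++ [a]) + arcCount A (a :: l₂) := by
  induction l₁ with
  | nil => simp [arcCount]
  | cons b l₁ ih => cases l₁ <;> simp_all [arcCount, add_assoc]

lemma length_le_arcCount_add_arcCount_reverse {l : List V} (hl : l.IsChain (SymmGen A)) :
    l.length ≤ arcCount A l + arcCount A l.reverse + 1 := by
  induction l with
  | nil => simp
  | cons a l ih =>
    cases l with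
    | nil => simp
    | cons b l =>
      have ih := ih hl.tail
      have hab : 1 ≤ arcCount A [a, b] + arcCount A [b, a] := by
        rcases (List.isChain_cons_cons.1 hl).1 with h | h <;> simp [arcCount, h]
      simp only [List.reverse_cons, List.append_assoc, List.singleton_append,
        List.length_cons] at ih ⊢
      rw [arcCount_append_cons _ [a] b]
      simp only [arcCount, add_zero] at hab ⊢
      omega

open Classical in
lemma arcCount_map_range_succ (f : ℕ → V) (n : ℕ) :
    arcCount A ((List.range (n + 1)).map f) = n.count fun i => A (f i) (f (i + 1)) := by
  induction n with
  | zero => simp [arcCount]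
  | succ n ih =>
    rw [Nat.count_succ, ← ih, List.range_succ, List.range_succ]
    simp only [List.map_append, List.map_cons, List.map_nil, List.append_assoc,
      List.singleton_append]
    rw [arcCount_append_cons]
    simp [arcCount]

lemma card_le_sum_arcCount_formPerm_add_one [DecidableEq V] {l : List V} (hl : l.Nodup)
    (hA : l.IsChain A) : #l.toFinset ≤ ∑ a ∈ l.toFinset, arcCount A [a, l.formPerm a] + 1 := by
  have hsub : l.dropLast.toFinset ⊆ l.toFinset :=
    fun a ha => by simpa using List.mem_of_mem_dropLast (by simpa using ha)
  calc #l.toFinset ≤ #l.dropLast.toFinset + 1 := by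
        rw [List.toFinset_card_of_nodup hl,
          List.toFinset_card_of_nodup (hl.sublist l.dropLast_sublist), List.length_dropLast]
        omega
    _ = ∑ a ∈ l.dropLast.toFinset, arcCount A [a, l.formPerm a] + 1 := by
        rw [card_eq_sum_ones]
        congr 1
        refine sum_congr rfl fun a ha => ?_
        simp [arcCount, rel_formPerm_of_mem_dropLast hl hA (List.mem_toFinset.1 ha)]
    _ ≤ ∑ a ∈ l.toFinset, arcCount A [a, l.formPerm a] + 1 := by gcongr

/-- Rédei's theorem, with the Hamilton path closed up into a cyclic order. -/
lemma exists_isCycleOn_card_le_sum_arcCount {W : Finset V}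
    (hW : (W : Set V).Pairwise (SymmGen A)) :
    ∃ σ : Equiv.Perm V, σ.IsCycleOn W ∧ #W ≤ ∑ w ∈ W, arcCount A [w, σ w] + 1 := by
  classical
  let l := W.toList.insertionSort A
  have hperm : l.Perm W.toList := List.perm_insertionSort A _
  have hnodup : l.Nodup := hperm.nodup_iff.2 W.nodup_toList
  have hW' : l.toFinset = W := by rw [List.toFinset_eq_of_perm _ _ hperm, toList_toFinset]
  have hchain : l.IsChain A := isChain_insertionSort <|
    W.nodup_toList.pairwise_of_forall_ne fun a ha b hb =>
      hW (by simpa using ha) (by simpa using hb)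
  refine ⟨l.formPerm, ?_, ?_⟩
  · rw [← hW', List.coe_toFinset]
    exact hnodup.isCycleOn_formPerm
  · simpa only [hW'] using card_le_sum_arcCount_formPerm_add_one hnodup hchain

end ArcCount

section HamOrientedCycle

variable {V : Type*} [Fintype V] {A : V → V → Prop}

lemma sigmaPlus_eq_count [NeZero (Fintype.card V)] (e : ZMod (Fintype.card V) ≃ V) :
    sigmaPlus A e = arcCount A ((List.range (Fintype.card V + 1)).map fun i : ℕ => e i) := by
  classical
  rw [arcCount_map_range_succ, Nat.count_eq_card_filter_range, sigmaPlus,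
    Nat.card_eq_fintype_card, Fintype.card_subtype]
  refine card_nbij' ZMod.val Nat.cast (fun i hi => ?_) (fun k hk => ?_) (fun i _ => by simp)
    fun k hk => ZMod.val_cast_of_lt (mem_range.1 (mem_filter.1 hk).1)
  · simpa [i.val_lt] using hi
  · simpa using (mem_filter.1 hk).2

lemma exists_hamOrientedCycle_of_isChain {a : V} {l : List V}
    (hlen : (a :: l).length = Fintype.card V) (hmem : ∀ b, b ∈ a :: l)
    (hchain : (a :: l ++ [a]).IsChain (SymmGen A)) :
    ∃ e : ZMod (Fintype.card V) ≃ V,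
      IsHamOrientedCycle A e ∧ sigmaPlus A e = arcCount A (a :: l ++ [a]) := by
  have : NeZero (Fintype.card V) := ⟨by simp [← hlen]⟩
  let f (i : ZMod (Fintype.card V)) : V := (a :: l)[ZMod.val i]'(hlen.symm ▸ ZMod.val_lt i)
  have hf : f.Bijective := by
    refine (Fintype.bijective_iff_surjective_and_card f).2 ⟨fun b => ?_, ZMod.card _⟩
    obtain ⟨i, hi, rfl⟩ := List.getElem_of_mem (hmem b)
    exact ⟨(i : ZMod _), by simp [f, ZMod.val_cast_of_lt (hlen ▸ hi)]⟩
  let e := Equiv.ofBijective f hf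
  have hlist : a :: l ++ [a] = (List.range (Fintype.card V + 1)).map fun i : ℕ => e i := by
    refine List.ext_getElem (by simp [← hlen]) fun i hi _ => ?_
    obtain hi | rfl : i < Fintype.card V ∨ i = Fintype.card V := by grind
    · rw [List.getElem_append_left (hlen.symm ▸ hi)]
      simp [e, f, Nat.mod_eq_of_lt hi]
    · simp [e, f, ← hlen]
  refine ⟨e, fun i => ?_, by rw [hlist, sigmaPlus_eq_count]⟩
  rw [hlist, List.isChain_map, List.isChain_range_succ] at hchain
  simpa [SymmGen] using hchain i.val i.val_lt

end HamOrientedCycle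

section Interlace

variable {V : Type*} {A : V → V → Prop}

/-- The walk `s, g₁, σ s, g₂, σ² s, …, gₖ` that follows the orbit of `s` under `σ` and makes the
detours `gs = [g₁, …, gₖ]` in between; the endpoint `σᵏ s` is left out. -/
def interlace (σ : V → V) : V → List (List V) → List V
  | _, [] => []
  | s, g :: gs => s :: g ++ interlace σ (σ s) gs

lemma interlace_perm (σ : V → V) (s : V) (gs : List (List V)) :
    (interlace σ s gs).Perm (List.iterate σ s gs.length ++ gs.flatten) := by
  induction gs generalizing s with
  | nil => simp [interlace]
  | cons g gs ih =>
    simp only [interlace, List.length_cons, List.iterate, List.flatten_cons, List.cons_append]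
    refine ((ih (σ s)).append_left g).cons s |>.trans (.cons s ?_)
    simpa only [List.append_assoc] using List.perm_append_comm.append_right gs.flatten

lemma interlace_append_cons (σ : V → V) (s b : V) (g : List V) (gs : List (List V))
    (hb : b = σ^[gs.length] (σ s)) : ∃ l, interlace σ (σ s) gs ++ [b] = σ s :: l ∧
      interlace σ s (g :: gs) ++ [b] = s :: g ++ σ s :: l := by
  cases gs <;> simp_all [interlace]

lemma isChain_interlace {r : V → V → Prop} {σ : V → V} {W : Set V} (hσ : W.MapsTo σ W)
    {gs : List (List V)} (hgs : ∀ g ∈ gs, ∀ w ∈ W, (w :: g ++ [σ w]).IsChain r)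
    {s : V} (hs : s ∈ W) : (interlace σ s gs ++ [σ^[gs.length] s]).IsChain r := by
  induction gs generalizing s with
  | nil => simp [interlace]
  | cons g gs ih =>
    obtain ⟨l, hl, hgl⟩ := interlace_append_cons σ s _ g gs rfl
    have ih := ih (fun g hg => hgs g (List.mem_cons_of_mem _ hg)) (hσ hs)
    rw [List.length_cons, Function.iterate_succ_apply, hgl, List.isChain_split]
    exact ⟨hgs g List.mem_cons_self s hs, hl ▸ ih⟩

lemma sum_arcCount_interlace {σ : V → V} {W : Finset V} (hσ : Set.BijOn σ W W)
    (gs : List (List V)) :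
    ∑ s ∈ W, arcCount A (interlace σ s gs ++ [σ^[gs.length] s]) =
      (gs.map fun g => ∑ w ∈ W, arcCount A (w :: g ++ [σ w])).sum := by
  induction gs with
  | nil => simp [interlace, arcCount]
  | cons g gs ih =>
    have hsplit (s : V) : arcCount A (interlace σ s (g :: gs) ++ [σ^[gs.length] (σ s)]) =
        arcCount A (s :: g ++ [σ s]) +
          arcCount A (interlace σ (σ s) gs ++ [σ^[gs.length] (σ s)]) := by
      obtain ⟨l, hl, hgl⟩ := interlace_append_cons σ s _ g gs rfl
      rw [hl, hgl, arcCount_append_cons]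
    simp only [List.length_cons, Function.iterate_succ_apply, hsplit, sum_add_distrib,
      List.map_cons, List.sum_cons, ← ih]
    congr 1
    exact sum_nbij σ hσ.mapsTo hσ.injOn hσ.surjOn fun _ _ => rfl

open Classical in
lemma sum_arcCount_swap {σ : V → V} {W : Finset V} (hσ : Set.BijOn σ W W)
    {g : List V} (hg : g ≠ []) :
    ∑ w ∈ W, arcCount A (w :: g ++ [σ w]) = ∑ w ∈ W, arcCount A (σ w :: g ++ [w]) := by
  obtain ⟨c, t, rfl⟩ := List.exists_cons_of_ne_nil hg
  have hreindex (f : V → ℕ) : ∑ w ∈ W, f (σ w) = ∑ w ∈ W, f w :=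
    sum_nbij σ hσ.mapsTo hσ.injOn hσ.surjOn fun _ _ => rfl
  -- As `g ≠ []`, no counted pair contains both `w` and `σ w`: each end is reindexed on its own.
  simp only [List.cons_append, arcCount, sum_add_distrib]
  rw [hreindex fun u => arcCount A (c :: (t ++ [u])), hreindex fun u => ite (A u c) 1 0]

lemma card_mul_le_sum_arcCount_add_reverse {σ : V → V} {W : Finset V} (hσ : Set.BijOn σ W W)
    {g : List V} (hg : g ≠ []) (hchain : ∀ w ∈ W, (w :: g ++ [σ w]).IsChain (SymmGen A)) :
    #W * (g.length + 1) ≤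
      ∑ w ∈ W, arcCount A (w :: g ++ [σ w]) + ∑ w ∈ W, arcCount A (w :: g.reverse ++ [σ w]) := by
  rw [sum_arcCount_swap hσ (List.reverse_ne_nil_iff.2 hg), ← sum_add_distrib, ← smul_eq_mul]
  refine card_nsmul_le_sum _ _ _ fun w hw => ?_
  simpa using length_le_arcCount_add_arcCount_reverse (hchain w hw)

lemma exists_hamOrientedCycle_of_interlace [Fintype V] {σ : Equiv.Perm V} {W : Finset V}
    (hσ : σ.IsCycleOn W) (hW : W.Nonempty) {gs : List (List V)} (hlen : gs.length = #W)
    (hflat : gs.flatten.length + #W = Fintype.card V) (hmem : ∀ b ∉ W, b ∈ gs.flatten)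
    (hchain : ∀ g ∈ gs, ∀ w ∈ W, (w :: g ++ [σ w]).IsChain (SymmGen A)) :
    ∃ e : ZMod (Fintype.card V) ≃ V, IsHamOrientedCycle A e ∧
      (gs.map fun g => ∑ w ∈ W, arcCount A (w :: g ++ [σ w])).sum ≤ #W * sigmaPlus A e := by
  have hclosed {s : V} (hs : s ∈ W) : σ^[gs.length] s = s := by
    rw [hlen, ← Equiv.Perm.coe_pow, hσ.pow_card_apply hs]
  obtain ⟨s, hs, hsum⟩ : ∃ s ∈ W,
      (gs.map fun g => ∑ w ∈ W, arcCount A (w :: g ++ [σ w])).sum ≤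
        #W * arcCount A (interlace σ s gs ++ [s]) := by
    rw [← sum_arcCount_interlace hσ.1, sum_congr rfl fun s hs => by rw [hclosed hs]]
    obtain ⟨s, hs, hmax⟩ := W.exists_max_image (fun s => arcCount A (interlace σ s gs ++ [s])) hW
    exact ⟨s, hs, sum_le_card_nsmul _ _ _ hmax⟩
  have hperm := interlace_perm σ s gs
  have hclosedChain := isChain_interlace hσ.1.mapsTo hchain hs
  obtain ⟨l, hl⟩ : ∃ l, interlace σ s gs = s :: l := by
    obtain ⟨g, gs, rfl⟩ := List.exists_cons_of_length_pos (hlen ▸ hW.card_pos)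
    exact ⟨_, rfl⟩
  rw [hclosed hs, hl] at hclosedChain
  rw [hl] at hperm hsum
  have hall (b : V) : b ∈ s :: l := by
    rw [hperm.mem_iff, List.mem_append]
    by_cases hb : b ∈ W
    · obtain ⟨k, hk, rfl⟩ := hσ.exists_pow_eq hs hb
      exact .inl (List.mem_iterate.2 ⟨k, hlen ▸ hk, by rw [Equiv.Perm.coe_pow]⟩)
    · exact .inr (hmem b hb)
  obtain ⟨e, he, hplus⟩ := exists_hamOrientedCycle_of_isChain
    (by rw [hperm.length_eq, List.length_append, List.length_iterate]; omega) hall hclosedChain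
  exact ⟨e, he, hplus ▸ hsum⟩

end Interlace

section Degree

variable {V : Type*} [Fintype V] {A : V → V → Prop}

open Classical in
lemma deg_eq_card_filter (A : V → V → Prop) (v : V) :
    deg A v = #{u | SymmGen A v u} := by
  rw [← Fintype.card_subtype, ← Nat.card_eq_fintype_card]
  rfl

lemma symmGen_of_card_sub_two_le_deg (hA : ∀ v, ¬ A v v) {u v : V} (huv : u ≠ v)
    (hnadj : ¬ SymmGen A u v) (hdeg : Fintype.card V - 2 ≤ deg A u) {b : V} (hbu : b ≠ u)
    (hbv : b ≠ v) : SymmGen A u b := by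
  classical
  have hsub : univ.filter (SymmGen A u) ⊆ {u, v}ᶜ := by
    intro t ht
    rw [mem_filter_univ] at ht
    rw [mem_compl, mem_insert, mem_singleton, not_or]
    refine ⟨?_, ?_⟩ <;> rintro rfl
    · exact ht.elim (hA t) (hA t)
    · exact hnadj ht
  have heq := eq_of_subset_of_card_le hsub <| by
    rwa [card_compl, card_pair huv, ← deg_eq_card_filter]
  rw [← mem_filter_univ (p := SymmGen A u), heq]
  simp [hbu, hbv]

end Degree

section Detours

variable {V : Type*} {A : V → V → Prop} {σ : Equiv.Perm V} {W : Finset V} {v x y : V} {zs : List V}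

lemma card_le_sum_arcCount_single {z : V} (hσ : Set.BijOn σ W W)
    (hz : ∀ w ∈ W, SymmGen A w z) : #W ≤ ∑ w ∈ W, arcCount A [w, z, σ w] := by
  have hchain : ∀ w ∈ W, [w, z, σ w].IsChain (SymmGen A) := fun w hw => by
    simp [hz w hw, (hz _ (hσ.mapsTo hw)).symm]
  have h := card_mul_le_sum_arcCount_add_reverse hσ (List.cons_ne_nil z []) hchain
  simp only [List.length_singleton, List.reverse_singleton, List.cons_append,
    List.nil_append] at h
  omega

lemma two_mul_card_le_sum_arcCount_or (hσ : Set.BijOn σ W W)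
    (hvx : SymmGen A v x) (hvy : SymmGen A v y)
    (hx : ∀ w ∈ W, SymmGen A w x) (hy : ∀ w ∈ W, SymmGen A w y) :
    2 * #W ≤ ∑ w ∈ W, arcCount A [w, x, v, y, σ w] ∨
      2 * #W ≤ ∑ w ∈ W, arcCount A [w, y, v, x, σ w] := by
  have hchain : ∀ w ∈ W, [w, x, v, y, σ w].IsChain (SymmGen A) := fun w hw => by
    simp [hx w hw, hvx.symm, hvy, (hy _ (hσ.mapsTo hw)).symm]
  have h := card_mul_le_sum_arcCount_add_reverse hσ (List.cons_ne_nil x [v, y]) hchain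
  simp only [List.length_cons, List.length_nil, List.reverse_cons, List.reverse_nil,
    List.cons_append, List.nil_append] at h
  omega

lemma isChain_detour {p : ℕ} (hσ : σ.IsCycleOn W) (hW : (W : Set V).Pairwise (SymmGen A))
    (hp : p < #W) (hvx : SymmGen A v x) (hvy : SymmGen A v y)
    (hN : ∀ z ∈ x :: y :: zs, ∀ w ∈ W, SymmGen A w z) :
    ∀ g ∈ [x, v, y] :: (zs.map ([·]) ++ List.replicate p []), ∀ w ∈ W,
      (w :: g ++ [σ w]).IsChain (SymmGen A) := by
  intro g hg w hw
  have hσw : σ w ∈ W := hσ.1.mapsTo hw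
  simp only [List.mem_cons, List.mem_append, List.mem_map, List.mem_replicate] at hg
  rcases hg with rfl | ⟨z, hz, rfl⟩ | ⟨hp0, rfl⟩
  · simp [hN x (by simp) w hw, hvx.symm, hvy, (hN y (by simp) _ hσw).symm]
  · simp [hN z (by simp [hz]) w hw, (hN z (by simp [hz]) _ hσw).symm]
  · have hnontrivial : (W : Set V).Nontrivial := one_lt_card_iff_nontrivial.1 (by omega)
    simpa using hW hw hσw (hσ.apply_ne hnontrivial hw).symm

lemma card_mul_card_add_one_le_sum_detours {p : ℕ} (hσ : Set.BijOn σ W W)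
    (hσA : #W ≤ ∑ w ∈ W, arcCount A [w, σ w] + 1)
    (hxvy : 2 * #W ≤ ∑ w ∈ W, arcCount A [w, x, v, y, σ w])
    (hzs : ∀ z ∈ zs, ∀ w ∈ W, SymmGen A w z) (hp : zs.length + p + 1 = #W) :
    #W * (#W + 1) ≤ (([x, v, y] :: (zs.map ([·]) ++ List.replicate p [])).map fun g =>
      ∑ w ∈ W, arcCount A (w :: g ++ [σ w])).sum + p := by
  have hsingles : zs.length * #W ≤ (zs.map fun z => ∑ w ∈ W, arcCount A [w, z, σ w]).sum := by
    simpa using List.card_nsmul_le_sum (zs.map fun z => ∑ w ∈ W, arcCount A [w, z, σ w]) #W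
      fun k hk => by
        obtain ⟨z, hz, rfl⟩ := List.mem_map.1 hk
        exact card_le_sum_arcCount_single hσ (hzs z hz)
  simp only [List.map_cons, List.map_append, List.map_map, List.map_replicate, List.sum_cons,
    List.sum_append, List.sum_replicate, List.cons_append, List.nil_append, Function.comp_def,
    smul_eq_mul]
  calc #W * (#W + 1) = 2 * #W + (zs.length * #W + p * #W) := by rw [← hp]; ring
    _ ≤ 2 * #W + (zs.length * #W + p * (∑ w ∈ W, arcCount A [w, σ w] + 1)) := by gcongr
    _ ≤ _ := by linarith

lemma exists_hamOrientedCycle_of_detours [Fintype V] (hσ : σ.IsCycleOn W)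
    (hσA : #W ≤ ∑ w ∈ W, arcCount A [w, σ w] + 1) (hW : (W : Set V).Pairwise (SymmGen A))
    (hvx : SymmGen A v x) (hvy : SymmGen A v y)
    (hN : ∀ z ∈ x :: y :: zs, ∀ w ∈ W, SymmGen A w z)
    (hxvy : 2 * #W ≤ ∑ w ∈ W, arcCount A [w, x, v, y, σ w])
    (hmem : ∀ b ∉ W, b ∈ v :: x :: y :: zs)
    (hcard : zs.length + 3 + #W = Fintype.card V) (hzs : zs.length < #W) :
    ∃ e : ZMod (Fintype.card V) ≃ V, IsHamOrientedCycle A e ∧ #W < sigmaPlus A e := by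
  obtain ⟨p, hp⟩ : ∃ p, zs.length + p + 1 = #W := ⟨#W - zs.length - 1, by omega⟩
  have hflat : ([x, v, y] :: (zs.map ([·]) ++ List.replicate p [])).flatten =
      x :: v :: y :: zs := by simp [← List.flatMap_def]
  obtain ⟨e, he, hsum⟩ := exists_hamOrientedCycle_of_interlace hσ (card_pos.1 (by omega))
    (by simp only [List.length_cons, List.length_append, List.length_map,
      List.length_replicate]; omega)
    (by rw [hflat, ← hcard]; rfl)
    (fun b hb => by rw [hflat]; exact (List.Perm.swap x v _).mem_iff.1 (hmem b hb))
    (isChain_detour (p := p) hσ hW (by omega) hvx hvy hN)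
  have htotal := card_mul_card_add_one_le_sum_detours hσ.1 hσA hxvy
    (fun z hz => hN z (by simp [hz])) hp
  refine ⟨e, he, lt_of_not_ge fun hle => ?_⟩
  have := Nat.mul_le_mul_left #W hle
  rw [mul_add_one] at htotal
  omega

end Detours

lemma exists_hamOrientedCycle_of_forall_symmGen {V : Type*} [Fintype V] {A : V → V → Prop}
    {v : V} {N : Finset V} (hvN : v ∉ N) (hN : 1 < #N) (hcard : 2 * #N ≤ Fintype.card V)
    (hv : ∀ x ∈ N, SymmGen A v x)
    (hadj : ∀ a ∉ N, a ≠ v → ∀ b, b ≠ a → b ≠ v → SymmGen A a b) :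
    ∃ e : ZMod (Fintype.card V) ≃ V,
      IsHamOrientedCycle A e ∧ Fintype.card V - #N ≤ sigmaPlus A e := by
  classical
  let W := (insert v N)ᶜ
  have hmemW (a : V) : a ∈ W ↔ a ≠ v ∧ a ∉ N := by simp [W]
  have hcardW : #W + (#N + 1) = Fintype.card V := by
    rw [← card_insert_of_notMem hvN, card_compl_add_card]
  have hWW : (W : Set V).Pairwise (SymmGen A) := fun a ha b hb hab =>
    hadj a ((hmemW a).1 ha).2 ((hmemW a).1 ha).1 b hab.symm ((hmemW b).1 hb).1
  have hWN : ∀ z ∈ N, ∀ w ∈ W, SymmGen A w z := fun z hz w hw =>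
    hadj w ((hmemW w).1 hw).2 ((hmemW w).1 hw).1 z
      (fun h => ((hmemW w).1 hw).2 (h ▸ hz)) fun h => hvN (h ▸ hz)
  obtain ⟨σ, hσ, hσA⟩ := exists_isCycleOn_card_le_sum_arcCount hWW
  have hdetours {x y : V} {zs : List V} (hperm : (x :: y :: zs).Perm N.toList)
      (hxvy : 2 * #W ≤ ∑ w ∈ W, arcCount A [w, x, v, y, σ w]) :
      ∃ e : ZMod (Fintype.card V) ≃ V,
        IsHamOrientedCycle A e ∧ Fintype.card V - #N ≤ sigmaPlus A e := by
    have hmemN (z : V) : z ∈ x :: y :: zs ↔ z ∈ N := by rw [hperm.mem_iff, mem_toList]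
    have hlen : zs.length + 2 = #N := by simpa using hperm.length_eq
    obtain ⟨e, he, hplus⟩ := exists_hamOrientedCycle_of_detours hσ hσA hWW
      (hv x ((hmemN x).1 (by simp))) (hv y ((hmemN y).1 (by simp)))
      (fun z hz => hWN z ((hmemN z).1 hz)) hxvy
      (fun b hb => by rw [List.mem_cons, hmemN]; grind) (by omega) (by omega)
    exact ⟨e, he, by omega⟩
  obtain ⟨x, y, zs, hxy⟩ : ∃ x y zs, N.toList = x :: y :: zs := by
    match h : N.toList with
    | x :: y :: zs => exact ⟨x, y, zs, rfl⟩
    | [] | [_] => have := length_toList N; simp_all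
  have hx : x ∈ N := by rw [← mem_toList, hxy]; simp
  have hy : y ∈ N := by rw [← mem_toList, hxy]; simp
  obtain h | h :=
    two_mul_card_le_sum_arcCount_or hσ.1 (hv x hx) (hv y hy) (hWN x hx) (hWN y hy)
  · exact hdetours (.of_eq hxy.symm) h
  · exact hdetours ((List.Perm.swap x y zs).trans (.of_eq hxy.symm)) h

theorem stmt3_general {V : Type*} [Fintype V] (A : V → V → Prop) (hA : ∀ v, ¬ A v v)
    (v : V) (hv1 : 1 < deg A v) (hv2 : 2 * deg A v ≤ Fintype.card V)
    (hdeg : ∀ u, u ≠ v → ¬ A u v → ¬ A v u → Fintype.card V - 2 ≤ deg A u) :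
    ∃ e : ZMod (Fintype.card V) ≃ V, IsHamOrientedCycle A e ∧
      Fintype.card V - deg A v ≤ sigmaMax A e := by
  classical
  rw [deg_eq_card_filter] at hv1 hv2 ⊢
  have hvv : v ∉ univ.filter (SymmGen A v) :=
    fun h => ((mem_filter_univ v).1 h).elim (hA v) (hA v)
  obtain ⟨e, he, hplus⟩ := exists_hamOrientedCycle_of_forall_symmGen hvv hv1 hv2
    (fun x hx => (mem_filter_univ x).1 hx)
    fun a ha hav b hba hbv => by
      have hnadj : ¬ SymmGen A a v := fun h => ha ((mem_filter_univ a).2 h.symm)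
      exact symmGen_of_card_sub_two_le_deg hA hav hnadj
        (hdeg a hav (hnadj ∘ .of_rel) (hnadj ∘ .of_rel_symm)) hba hbv
  exact ⟨e, he, hplus.trans (le_max_left _ _)⟩

/-- If `D` is an oriented graph on `n` vertices with minimum degree `δ`,
`1 < δ < n/2`, and `d(u) + d(v) ≥ n + δ - 2` for every pair of non-adjacent vertices,
then `D` has a Hamilton oriented cycle `C` with `σ_max(C) ≥ n - δ`. -/
theorem stmt3 {V : Type*} [Fintype V] (A : V → V → Prop) (hA : IsOriented A)
    (δ : ℕ) (hδmin : ∀ v, δ ≤ deg A v) (hδex : ∃ v, deg A v = δ)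
    (hδ1 : 1 < δ) (hδ2 : 2 * δ < Fintype.card V)
    (hsum : ∀ u v : V, u ≠ v → ¬ A u v → ¬ A v u →
      Fintype.card V + δ - 2 ≤ deg A u + deg A v) :
    ∃ e : ZMod (Fintype.card V) ≃ V, IsHamOrientedCycle A e ∧
      Fintype.card V - δ ≤ sigmaMax A e := by
  obtain ⟨v, rfl⟩ := hδex
  exact stmt3_general A (fun v h => (hA v v h).1 rfl) v hδ1 hδ2.le fun u huv h₁ h₂ => by
    have := hsum u v huv h₁ h₂
    omega
end

section
/- Let k ≥ 0 and let D be an oriented graph on n ≥ 30 + 4(k−1) vertices with s*(D) ≥ 8k. Then D contains a Hamilton oriented cycle C with σ_max(C) ≥ ⌈(n+k)/2⌉. -/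
open Classical in
/-- `s*(D)`: the minimum of `d(u)+d(v)-n` over pairs of distinct non-adjacent vertices,
or `n-2` if there are no such pairs (i.e. `D` is a tournament). -/
noncomputable def sStar {V : Type*} [Fintype V] (A : V → V → Prop) : ℤ :=
  if (∃ u v : V, u ≠ v ∧ ¬ A u v ∧ ¬ A v u) then
    sInf {z : ℤ | ∃ u v : V, u ≠ v ∧ ¬ A u v ∧ ¬ A v u ∧
      z = (deg A u : ℤ) + (deg A v : ℤ) - (Fintype.card V : ℤ)}
  else (Fintype.card V : ℤ) - 2

/-!
Let `b` and `c` be adjacent vertices with three common neighbours. By parity, two of these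
neighbours, `p` and `q`, are such that the paths `p b c q` and `p c b q` have different numbers of
forward arcs. An Ore condition with slack `4k` leaves room to choose, greedily, `k` disjoint
four-vertex paths of this kind.

Regard these paths and the remaining vertices as blocks, to be linked into a Hamilton cycle that
traverses each block as a path. Ore's argument still applies: if the two ends of a list of blocks
are not adjacent, some final segment can be reversed so that the list closes up. Only end vertices
of blocks are available for the new edges, and the slack compensates for the `3k` links between
consecutive vertices inside the blocks.

Finally swap `b` and `c` inside each block, or not, so as to have in total as many forward arcs as
possible, or as few as possible. This gives two Hamilton cycles, `C` and `C'`, that differ only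
inside the blocks and satisfy `σ⁺(C) ≥ σ⁺(C') + k`, that is, `σ⁺(C) + σ⁻(C') ≥ n + k`.
-/

namespace HamiltonDiscrepancy

open List

section ConsecutivePairs

variable {α β : Type*} {R S : α → α → Prop} {X Y Z l : List α}

open Classical in
/-- The Iverson bracket of a proposition, used to count the pairs that satisfy a relation. -/
noncomputable def iverson (p : Prop) : ℕ := if p then 1 else 0

lemma iverson_of_true {p : Prop} (hp : p) : iverson p = 1 := if_pos hp

lemma iverson_of_not {p : Prop} (hp : ¬ p) : iverson p = 0 := if_neg hp

lemma iverson_le_one (p : Prop) : iverson p ≤ 1 := by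
  unfold iverson
  split_ifs <;> omega

lemma iverson_or {p q : Prop} (hpq : p → ¬ q) : iverson (p ∨ q) = iverson p + iverson q := by
  classical
  by_cases hp : p
  · simp [iverson, hp, hpq hp]
  · simp [iverson, hp]

/-- The last entry of `X` is `R`-related to the first entry of `Y`; in particular both lists are
nonempty. When `R` is adjacency, this says that the path `X` can be continued by the path `Y`. -/
def Joins (R : α → α → Prop) (X Y : List α) : Prop :=
  ∃ x ∈ X.getLast?, ∃ y ∈ Y.head?, R x y

/-- The number of pairs of consecutive entries of a list that satisfy `R`. -/
noncomputable def stepCount (R : α → α → Prop) : List α → ℕ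
  | x :: y :: l => iverson (R x y) + stepCount R (y :: l)
  | _ => 0

/-- The number of pairs of cyclically consecutive entries of a list that satisfy `R`, the pair
formed by the last and the first entry being counted as well. -/
noncomputable def cyclicCount (R : α → α → Prop) (l : List α) : ℕ :=
  stepCount R l + iverson (Joins R l l)

lemma Joins.left_ne_nil (h : Joins R X Y) : X ≠ [] := by
  rintro rfl
  simp [Joins] at h

lemma Joins.right_ne_nil (h : Joins R X Y) : Y ≠ [] := by
  rintro rfl
  simp [Joins] at h

lemma joins_append_left (hY : Y ≠ []) : Joins R (X ++ Y) Z ↔ Joins R Y Z := by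
  simp only [Joins, getLast?_append, getLast?_eq_some_getLast hY, Option.some_or]

lemma joins_append_right (hX : X ≠ []) : Joins R Z (X ++ Y) ↔ Joins R Z X := by
  simp only [Joins, head?_append, head?_eq_some_head hX, Option.some_or]

lemma joins_append_self (hX : X ≠ []) (hY : Y ≠ []) :
    Joins R (X ++ Y) (X ++ Y) ↔ Joins R Y X := by
  rw [joins_append_left hY, joins_append_right hX]

lemma joins_reverse : Joins R X.reverse Y.reverse ↔ Joins (fun a b ↦ R b a) Y X := by
  simp only [Joins, getLast?_reverse, head?_reverse]
  exact ⟨fun ⟨x, hx, y, hy, h⟩ ↦ ⟨y, hy, x, hx, h⟩, fun ⟨y, hy, x, hx, h⟩ ↦ ⟨x, hx, y, hy, h⟩⟩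

lemma joins_map (f : β → α) (X Y : List β) :
    Joins R (X.map f) (Y.map f) ↔ Joins (fun a b ↦ R (f a) (f b)) X Y := by
  simp [Joins]

lemma joins_or : Joins (fun a b ↦ R a b ∨ S a b) X Y ↔ Joins R X Y ∨ Joins S X Y := by
  simp only [Joins, and_or_left, exists_or]

lemma not_joins_of_forall_not (hRS : ∀ a b, R a b → ¬ S a b) (h : Joins R X Y) :
    ¬ Joins S X Y := by
  obtain ⟨x, hx, y, hy, hxy⟩ := h
  rintro ⟨x', hx', y', hy', hxy'⟩
  obtain rfl := Option.mem_unique hx hx'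
  obtain rfl := Option.mem_unique hy hy'
  exact hRS x y hxy hxy'

lemma joins_ne_self_of_nodup (hl : l.Nodup) (h2 : 2 ≤ l.length) : Joins (· ≠ ·) l l := by
  match l, h2 with
  | x :: y :: l, _ =>
    obtain ⟨z, hz⟩ := Option.ne_none_iff_exists'.1 (mt getLast?_eq_none_iff.1 (cons_ne_nil y l))
    refine ⟨z, hz, x, rfl, ?_⟩
    rintro rfl
    exact (nodup_cons.1 hl).1 (mem_of_getLast? hz)

lemma stepCount_cons (x : α) (l : List α) :
    stepCount R (x :: l) = iverson (Joins R [x] l) + stepCount R l := by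
  classical cases l <;> simp [stepCount, Joins, iverson]

lemma stepCount_append (X Y : List α) :
    stepCount R (X ++ Y) =
      stepCount R X + iverson (Joins R X Y) + stepCount R Y := by
  induction X with
  | nil => simp [stepCount, Joins, iverson]
  | cons x X ih =>
    rcases eq_or_ne X [] with rfl | hX
    · simp [stepCount_cons, stepCount, Joins, iverson]
    · have hjoin : Joins R (x :: X) Y ↔ Joins R X Y := joins_append_left (X := [x]) hX
      rw [cons_append, stepCount_cons, stepCount_cons, ih]
      simp only [joins_append_right hX, hjoin]
      ring

lemma stepCount_reverse (l : List α) :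
    stepCount R l.reverse = stepCount (fun a b ↦ R b a) l := by
  induction l with
  | nil => rfl
  | cons x l ih =>
    have hjoin : Joins R l.reverse [x] ↔ Joins (fun a b ↦ R b a) [x] l :=
      joins_reverse (Y := [x])
    have hlast : stepCount R [x] = 0 := rfl
    rw [reverse_cons, stepCount_append, hlast, ih, hjoin, stepCount_cons]
    ring

lemma stepCount_map (f : β → α) (l : List β) :
    stepCount R (l.map f) = stepCount (fun a b ↦ R (f a) (f b)) l := by
  induction l with
  | nil => rfl
  | cons x l ih => simp only [map_cons, stepCount_cons, ih, ← joins_map, map_nil]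

lemma stepCount_congr (h : ∀ a ∈ l, ∀ b ∈ l, R a b ↔ S a b) : stepCount R l = stepCount S l := by
  induction l with
  | nil => rfl
  | cons x l ih =>
    cases l with
    | nil => rfl
    | cons y l =>
      simp only [stepCount, h x (by simp) y (by simp)]
      rw [ih fun a ha b hb ↦ h a (mem_cons_of_mem x ha) b (mem_cons_of_mem x hb)]

lemma stepCount_or (hRS : ∀ a b, R a b → ¬ S a b) (l : List α) :
    stepCount (fun a b ↦ R a b ∨ S a b) l = stepCount R l + stepCount S l := by
  induction l with
  | nil => rfl
  | cons x l ih =>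
    rw [stepCount_cons, stepCount_cons, stepCount_cons, ih, joins_or,
      iverson_or (not_joins_of_forall_not hRS)]
    ring

lemma stepCount_of_isChain (h : l.IsChain R) : stepCount R l = l.length - 1 := by
  induction l with
  | nil => rfl
  | cons x l ih =>
    cases l with
    | nil => rfl
    | cons y l =>
      rw [isChain_cons_cons] at h
      simp only [stepCount, iverson_of_true h.1, ih h.2, length_cons]
      omega

lemma exists_append_joins_of_stepCount_pos (h : 0 < stepCount R l) :
    ∃ X Y, l = X ++ Y ∧ Joins R X Y := by
  induction l with
  | nil => simp [stepCount] at h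
  | cons x l ih =>
    by_cases hx : Joins R [x] l
    · exact ⟨[x], l, rfl, hx⟩
    · rw [stepCount_cons, iverson_of_not hx, zero_add] at h
      obtain ⟨X, Y, rfl, hXY⟩ := ih h
      exact ⟨x :: X, Y, rfl, (joins_append_left (X := [x]) hXY.left_ne_nil).2 hXY⟩

lemma stepCount_add_stepCount_not (l : List α) :
    stepCount R l + stepCount (fun a b ↦ ¬ R a b) l = l.length - 1 := by
  rw [← stepCount_or fun _ _ ↦ not_not_intro]
  exact stepCount_of_isChain (pairwise_of_forall fun _ _ ↦ em _).isChain

/-- Pigeonhole: a list of length `m` has only `m - 1` pairs of consecutive entries. -/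
lemma countP_tail_add_countP_dropLast_le (f g : α → Prop) [DecidablePred f] [DecidablePred g]
    (l : List α) :
    l.tail.countP (f ·) + l.dropLast.countP (g ·) ≤
      stepCount (fun a b ↦ g a ∧ f b) l + (l.length - 1) := by
  induction l with
  | nil => simp
  | cons x l ih =>
    cases l with
    | nil => simp
    | cons y l =>
      simp only [tail_cons, dropLast_cons_cons, countP_cons, decide_eq_true_eq, stepCount,
        iverson, length_cons] at ih ⊢
      split_ifs <;> first | omega | tauto

lemma cyclicCount_append_comm (X Y : List α) : cyclicCount R (X ++ Y) = cyclicCount R (Y ++ X) := by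
  rcases eq_or_ne X [] with rfl | hX
  · simp
  rcases eq_or_ne Y [] with rfl | hY
  · simp
  simp only [cyclicCount, stepCount_append, joins_append_self hX hY, joins_append_self hY hX]
  ring

lemma cyclicCount_congr (h : ∀ a ∈ l, ∀ b ∈ l, R a b ↔ S a b) :
    cyclicCount R l = cyclicCount S l := by
  have hjoin : Joins R l l ↔ Joins S l l := by
    refine exists_congr fun a ↦ and_congr_right fun ha ↦ exists_congr fun b ↦
      and_congr_right fun hb ↦ h a (mem_of_getLast? ha) b (mem_of_head? hb)
  rw [cyclicCount, cyclicCount, stepCount_congr h]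
  simp only [hjoin]

lemma cyclicCount_map (f : β → α) (l : List β) :
    cyclicCount R (l.map f) = cyclicCount (fun a b ↦ R (f a) (f b)) l := by
  simp only [cyclicCount, stepCount_map, joins_map]

lemma cyclicCount_or (hRS : ∀ a b, R a b → ¬ S a b) (l : List α) :
    cyclicCount (fun a b ↦ R a b ∨ S a b) l = cyclicCount R l + cyclicCount S l := by
  rw [cyclicCount, cyclicCount, cyclicCount, stepCount_or hRS, joins_or,
    iverson_or (not_joins_of_forall_not hRS)]
  ring

lemma exists_rotation_not_joins_of_cyclicCount_lt (h : cyclicCount R l < l.length) :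
    ∃ X Y, l = X ++ Y ∧ ¬ Joins R (Y ++ X) (Y ++ X) := by
  by_cases hl : Joins R l l
  · have hsteps := stepCount_add_stepCount_not (R := R) l
    rw [cyclicCount, iverson_of_true hl] at h
    obtain ⟨X, Y, rfl, hXY⟩ :=
      exists_append_joins_of_stepCount_pos (R := fun a b ↦ ¬ R a b) (l := l) (by omega)
    exact ⟨X, Y, rfl, fun h ↦ not_joins_of_forall_not (fun _ _ ↦ id) hXY
      ((joins_append_self hXY.right_ne_nil hXY.left_ne_nil).1 h)⟩
  · exact ⟨l, [], by simp, hl⟩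

lemma joins_flatten {L M : List (List α)} (hL : ∀ B ∈ L, B ≠ []) (hM : ∀ B ∈ M, B ≠ []) :
    Joins R L.flatten M.flatten ↔ Joins (Joins R) L M := by
  rcases eq_nil_or_concat' L with rfl | ⟨L, B, rfl⟩
  · simp [Joins]
  rcases M with - | ⟨C, M⟩
  · simp [Joins]
  rw [flatten_append, flatten_singleton, flatten_cons, joins_append_left (hL B (by simp)),
    joins_append_right (hM C (by simp))]
  simp [Joins]

lemma stepCount_flatten {L : List (List α)} (hL : ∀ B ∈ L, B ≠ []) :
    stepCount R L.flatten = (L.map (stepCount R)).sum + stepCount (Joins R) L := by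
  induction L with
  | nil => rfl
  | cons B L ih =>
    obtain ⟨hB, hL⟩ := forall_mem_cons.1 hL
    have hjoin := joins_flatten (R := R) (L := [B]) (by simpa using hB) hL
    rw [flatten_singleton] at hjoin
    rw [flatten_cons, stepCount_append, ih hL, stepCount_cons]
    simp only [hjoin, map_cons, sum_cons]
    ring

lemma cyclicCount_flatten {L : List (List α)} (hL : ∀ B ∈ L, B ≠ []) :
    cyclicCount R L.flatten = (L.map (stepCount R)).sum + cyclicCount (Joins R) L := by
  rw [cyclicCount, cyclicCount, stepCount_flatten hL, add_assoc]
  simp only [joins_flatten hL hL]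

lemma stepCount_ofFn {m : ℕ} (f : Fin (m + 1) → α) :
    stepCount R (ofFn f) = ∑ i : Fin m, iverson (R (f i.castSucc) (f i.succ)) := by
  induction m with
  | zero => simp [stepCount]
  | succ m ih =>
    have hjoin : Joins R [f 0] (ofFn fun i ↦ f i.succ) ↔ R (f 0) (f 1) := by simp [Joins]
    rw [ofFn_succ, stepCount_cons, ih, Fin.sum_univ_succ, hjoin]
    rfl

lemma cyclicCount_ofFn {m : ℕ} (f : Fin (m + 1) → α) :
    cyclicCount R (ofFn f) = Nat.card {i // R (f i) (f (i + 1))} := by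
  classical
  have hclose : Joins R (ofFn f) (ofFn f) ↔ R (f (Fin.last m)) (f (Fin.last m + 1)) := by
    have hlast : (ofFn f).getLast? = some (f (Fin.last m)) := by
      rw [getLast?_eq_some_getLast (by simp), getLast_ofFn_succ]
    have hhead : (ofFn f).head? = some (f (Fin.last m + 1)) := by simp
    simp only [Joins, hlast, hhead, Option.mem_some_iff, exists_eq_left']
  rw [cyclicCount, stepCount_ofFn, Nat.card_eq_fintype_card, Fintype.card_subtype,
    Finset.card_filter, Fin.sum_univ_castSucc, hclose]
  simp only [iverson, Fin.coeSucc_eq_succ]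

end ConsecutivePairs

section BlockPartitions

variable {α V : Type*}

/-- The list of blocks obtained by traversing a list of blocks backwards, each block being
reversed as well. -/
def reverseBlocks (L : List (List α)) : List (List α) := (L.map reverse).reverse

lemma flatten_reverseBlocks (L : List (List α)) :
    (reverseBlocks L).flatten = L.flatten.reverse :=
  (reverse_flatten ..).symm

lemma forall_mem_reverseBlocks {P : List α → Prop} {L : List (List α)} :
    (∀ B ∈ reverseBlocks L, P B) ↔ ∀ B ∈ L, P B.reverse := by
  simp only [reverseBlocks, mem_reverse, forall_mem_map]

lemma stepCount_reverseBlocks {R : α → α → Prop} (hR : ∀ a b, R a b ↔ R b a) (L : List (List α)) :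
    stepCount (Joins R) (reverseBlocks L) = stepCount (Joins R) L := by
  rw [reverseBlocks, stepCount_reverse, stepCount_map]
  simp only [joins_reverse, ← hR]

lemma countP_flatten_add_length_le (p : α → Prop) [DecidablePred p] {L : List (List α)}
    (hL : ∀ B ∈ L, B ≠ []) :
    L.flatten.countP (p ·) + L.length ≤
      L.countP (fun B ↦ ∃ v ∈ B.head?, p v) + L.flatten.length := by
  induction L with
  | nil => simp
  | cons B L ih =>
    obtain ⟨v, B, rfl⟩ := exists_cons_of_ne_nil (hL B mem_cons_self)
    have hrest := countP_le_length (p := fun a ↦ decide (p a)) (l := B)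
    specialize ih fun C hC ↦ hL C (mem_cons_of_mem _ hC)
    simp only [flatten_cons, countP_append, countP_cons, length_append, length_cons, head?_cons,
      Option.mem_some_iff, exists_eq_left', decide_eq_true_eq]
    omega

/-- `L` cuts the vertex set into nonempty lists satisfying `P`. The lists are meant to be paths,
which are to be linked into a Hamilton cycle by edges between end vertices. -/
structure IsBlockPartition [Fintype V] (P : List V → Prop) (L : List (List V)) : Prop where
  perm : L.flatten.Perm Finset.univ.toList
  ne_nil : ∀ B ∈ L, B ≠ []
  prop : ∀ B ∈ L, P B

/-- Ore's condition with slack `s`: the degrees of any two distinct non-adjacent vertices add up to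
at least `s` more than the number of vertices. -/
def OreCondition [Fintype V] (G : SimpleGraph V) [DecidableRel G.Adj] (s : ℕ) : Prop :=
  ∀ u v, u ≠ v → ¬ G.Adj u v → Fintype.card V + s ≤ G.degree u + G.degree v

namespace IsBlockPartition

variable [Fintype V] {P : List V → Prop} {L X Y : List (List V)}

lemma nodup_flatten (h : IsBlockPartition P L) : L.flatten.Nodup :=
  h.perm.nodup_iff.2 (Finset.nodup_toList _)

lemma length_flatten (h : IsBlockPartition P L) : L.flatten.length = Fintype.card V := by
  rw [h.perm.length_eq, Finset.length_toList, Finset.card_univ]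

lemma append_comm (h : IsBlockPartition P (X ++ Y)) : IsBlockPartition P (Y ++ X) where
  perm := perm_append_comm.flatten.trans h.perm
  ne_nil B hB := h.ne_nil B (perm_append_comm.subset hB)
  prop B hB := h.prop B (perm_append_comm.subset hB)

lemma append_reverseBlocks (hP : ∀ B, P B → P B.reverse) (h : IsBlockPartition P (X ++ Y)) :
    IsBlockPartition P (X ++ reverseBlocks Y) where
  perm := by
    refine Perm.trans ?_ h.perm
    rw [flatten_append, flatten_append, flatten_reverseBlocks]
    exact (reverse_perm _).append_left _
  ne_nil := by
    obtain ⟨hX, hY⟩ := forall_mem_append.1 h.ne_nil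
    exact forall_mem_append.2 ⟨hX, forall_mem_reverseBlocks.2 fun B hB ↦ by simpa using hY B hB⟩
  prop := by
    obtain ⟨hX, hY⟩ := forall_mem_append.1 h.prop
    exact forall_mem_append.2 ⟨hX, forall_mem_reverseBlocks.2 fun B hB ↦ hP B (hY B hB)⟩

variable {G : SimpleGraph V} [DecidableRel G.Adj]

lemma degree_eq_countP (h : IsBlockPartition P L) (x : V) :
    G.degree x = L.flatten.countP (G.Adj x ·) := by
  rw [h.perm.countP_eq, ← G.card_neighborFinset_eq_degree, G.neighborFinset_eq_filter,
    countP_eq_length_filter, Finset.card_def, ← Multiset.coe_card, ← Multiset.filter_coe,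
    Finset.coe_toList, Finset.filter_val]

lemma degree_add_length_le_head (h : IsBlockPartition P L) (x : V) :
    G.degree x + L.length ≤ L.countP (fun B ↦ ∃ v ∈ B.head?, G.Adj x v) + Fintype.card V := by
  have hcount := countP_flatten_add_length_le (G.Adj x) h.ne_nil
  rw [h.length_flatten] at hcount
  rwa [h.degree_eq_countP x]

lemma degree_add_length_le_getLast (h : IsBlockPartition P L) (x : V) :
    G.degree x + L.length ≤ L.countP (fun B ↦ ∃ v ∈ B.getLast?, G.Adj x v) + Fintype.card V := by
  have hrev : IsBlockPartition (fun _ ↦ True) (reverseBlocks L) :=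
    append_reverseBlocks (X := []) (fun _ _ ↦ trivial) ⟨h.perm, h.ne_nil, fun _ _ ↦ trivial⟩
  simpa [reverseBlocks, countP_map, Function.comp_def] using
    hrev.degree_add_length_le_head (G := G) x

lemma joins_ne_self (h : IsBlockPartition P L) (hV : 2 ≤ Fintype.card V) :
    Joins (Joins (· ≠ ·)) L L :=
  (joins_flatten h.ne_nil h.ne_nil).1
    (joins_ne_self_of_nodup h.nodup_flatten (hV.trans_eq h.length_flatten.symm))

lemma exists_append_adj_of_not_adj (h : IsBlockPartition P L) {s : ℕ} (hG : OreCondition G s)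
    (hs : Fintype.card V ≤ L.length + s) {E F : List V} {x z : V} (hF : F ∈ L.head?)
    (hx : x ∈ F.head?) (hE : E ∈ L.getLast?) (hz : z ∈ E.getLast?) (hxz : x ≠ z)
    (hnadj : ¬ G.Adj x z) :
    ∃ X Y, L = X ++ Y ∧
      Joins (fun B C ↦ (∃ v ∈ B.getLast?, G.Adj z v) ∧ ∃ v ∈ C.head?, G.Adj x v) X Y := by
  have hdeg := hG x z hxz hnadj
  have hdegx := h.degree_add_length_le_head (G := G) x
  have hdegz := h.degree_add_length_le_getLast (G := G) z
  have hpigeon := countP_tail_add_countP_dropLast_le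
    (fun B ↦ ∃ v ∈ B.head?, G.Adj x v) (fun B ↦ ∃ v ∈ B.getLast?, G.Adj z v) L
  have hhead : L.tail.countP (fun B ↦ ∃ v ∈ B.head?, G.Adj x v) =
      L.countP (fun B ↦ ∃ v ∈ B.head?, G.Adj x v) := by
    obtain ⟨L, rfl⟩ := head?_eq_some_iff.1 hF
    simp [Option.mem_def.1 hx]
  have hlast : L.dropLast.countP (fun B ↦ ∃ v ∈ B.getLast?, G.Adj z v) =
      L.countP (fun B ↦ ∃ v ∈ B.getLast?, G.Adj z v) := by
    obtain ⟨L, rfl⟩ := getLast?_eq_some_iff.1 hE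
    simp [countP_append, Option.mem_def.1 hz]
  have hlen : 0 < L.length := length_pos_of_mem (mem_of_head? hF)
  exact exists_append_joins_of_stepCount_pos (by omega)

lemma exists_append_joins_reverseBlocks (h : IsBlockPartition P L) {s : ℕ} (hG : OreCondition G s)
    (hV : 2 ≤ Fintype.card V) (hs : Fintype.card V ≤ L.length + s)
    (hL : ¬ Joins (Joins G.Adj) L L) :
    ∃ X Y, L = X ++ Y ∧ Joins (Joins G.Adj) X (reverseBlocks Y) ∧
      Joins (Joins G.Adj) (reverseBlocks Y) X := by
  obtain ⟨E, hE, F, hF, z, hz, x, hx, hzx⟩ := h.joins_ne_self hV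
  have hnadj : ¬ G.Adj x z := fun hxz ↦ hL ⟨E, hE, F, hF, z, hz, x, hx, hxz.symm⟩
  obtain ⟨X, Y, rfl, B, hB, C, hC, ⟨v, hv, hzv⟩, w, hw, hxw⟩ :=
    h.exists_append_adj_of_not_adj hG hs hF hx hE hz hzx.symm hnadj
  have hX : X ≠ [] := ne_nil_of_mem (mem_of_getLast? hB)
  have hY : Y ≠ [] := ne_nil_of_mem (mem_of_head? hC)
  refine ⟨X, Y, rfl, ⟨B, hB, E.reverse, ?_, v, hv, z, ?_, hzv.symm⟩,
    C.reverse, ?_, F, ?_, w, ?_, x, hx, hxw.symm⟩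
  · rw [reverseBlocks, head?_reverse, getLast?_map, ← getLast?_append_of_ne_nil X hY, hE]
    rfl
  · rwa [head?_reverse]
  · rw [reverseBlocks, getLast?_reverse, head?_map, hC]
    rfl
  · rwa [← head?_append_of_ne_nil X hX]
  · rwa [getLast?_reverse]

lemma exists_cyclicCount_lt (h : IsBlockPartition P L) (hP : ∀ B, P B → P B.reverse) {s : ℕ}
    (hG : OreCondition G s) (hV : 2 ≤ Fintype.card V) (hs : Fintype.card V ≤ L.length + s)
    (hL : cyclicCount (Joins G.Adj) L < L.length) :
    ∃ L', IsBlockPartition P L' ∧ L'.length = L.length ∧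
      cyclicCount (Joins G.Adj) L < cyclicCount (Joins G.Adj) L' := by
  obtain ⟨X, Y, rfl, hXY⟩ := exists_rotation_not_joins_of_cyclicCount_lt hL
  rw [(perm_append_comm (l₁ := X)).length_eq] at hs ⊢
  rw [cyclicCount_append_comm]
  have hYX := h.append_comm
  generalize Y ++ X = L' at *
  obtain ⟨Z, W, rfl, hZW, hWZ⟩ := hYX.exists_append_joins_reverseBlocks hG hV hs hXY
  refine ⟨Z ++ reverseBlocks W, hYX.append_reverseBlocks hP, by simp [reverseBlocks], ?_⟩
  have hclosed := (joins_append_self hZW.left_ne_nil hZW.right_ne_nil).2 hWZ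
  rw [cyclicCount, cyclicCount, iverson_of_not hXY, iverson_of_true hclosed, stepCount_append,
    stepCount_append, iverson_of_true hZW, stepCount_reverseBlocks fun _ _ ↦ ?_]
  · have := iverson_le_one (Joins (Joins G.Adj) Z W)
    omega
  · exact G.adj_comm ..

lemma exists_cyclicCount_eq_length (h : IsBlockPartition P L) (hP : ∀ B, P B → P B.reverse) {s : ℕ}
    (hG : OreCondition G s) (hV : 2 ≤ Fintype.card V) (hs : Fintype.card V ≤ L.length + s) :
    ∃ L', IsBlockPartition P L' ∧ L'.length = L.length ∧
      L'.length ≤ cyclicCount (Joins G.Adj) L' := by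
  induction hd : L.length - cyclicCount (Joins G.Adj) L using Nat.strong_induction_on
    generalizing L with
  | _ d ih =>
    rcases le_or_gt L.length (cyclicCount (Joins G.Adj) L) with hle | hlt
    · exact ⟨L, h, rfl, hle⟩
    obtain ⟨L₁, h₁, hlen, hcount⟩ := h.exists_cyclicCount_lt hP hG hV hs hlt
    obtain ⟨L₂, h₂, hlen', hcount'⟩ := ih _ (by omega) h₁ (by omega) rfl
    exact ⟨L₂, h₂, hlen'.trans hlen, hcount'⟩

end IsBlockPartition

end BlockPartitions

section FlexibleBlocks

variable {V : Type*} {A : V → V → Prop} {B : List V}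

/-- The list `B'` is a path with the same vertices and the same end vertices as `B`. -/
structure IsRerouting (G : SimpleGraph V) (B B' : List V) : Prop where
  perm : B'.Perm B
  head?_eq : B'.head? = B.head?
  getLast?_eq : B'.getLast? = B.getLast?
  isChain : B'.IsChain G.Adj

namespace IsRerouting

variable {G : SimpleGraph V} {B' : List V}

lemma reverse (h : IsRerouting G B B') : IsRerouting G B.reverse B'.reverse where
  perm := (reverse_perm B').trans (h.perm.trans (reverse_perm B).symm)
  head?_eq := by rw [head?_reverse, head?_reverse, h.getLast?_eq]
  getLast?_eq := by rw [getLast?_reverse, getLast?_reverse, h.head?_eq]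
  isChain := by
    rw [isChain_reverse]
    exact h.isChain.imp fun _ _ h ↦ h.symm

lemma ne_nil (h : IsRerouting G B B') (hB : B ≠ []) : B' ≠ [] :=
  mt (fun hB' ↦ nil_perm.1 (hB' ▸ h.perm)) hB

lemma joins_iff {R : V → V → Prop} {C C' : List V} (hB : IsRerouting G B B')
    (hC : IsRerouting G C C') : Joins R B' C' ↔ Joins R B C := by
  rw [Joins, Joins, hB.getLast?_eq, hC.head?_eq]

lemma stepCount_adj (h : IsRerouting G B B') : stepCount G.Adj B' = B.length - 1 := by
  rw [stepCount_of_isChain h.isChain, h.perm.length_eq]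

end IsRerouting

section Reroute

variable {G : SimpleGraph V} {L : List (List V)} {r : List V → List V}

lemma cyclicCount_flatten_map {R : V → V → Prop} (hL : ∀ B ∈ L, B ≠ [])
    (hr : ∀ B ∈ L, IsRerouting G B (r B)) :
    cyclicCount R (L.map r).flatten =
      (L.map fun B ↦ stepCount R (r B)).sum + cyclicCount (Joins R) L := by
  have hne : ∀ B ∈ L.map r, B ≠ [] := forall_mem_map.2 fun B hB ↦ (hr B hB).ne_nil (hL B hB)
  rw [cyclicCount_flatten hne, cyclicCount_map, map_map,
    cyclicCount_congr fun B hB C hC ↦ (hr B hB).joins_iff (hr C hC)]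
  rfl

namespace IsBlockPartition

variable [Fintype V] {P : List V → Prop}

lemma perm_flatten_map (h : IsBlockPartition P L) (hr : ∀ B ∈ L, IsRerouting G B (r B)) :
    (L.map r).flatten.Perm Finset.univ.toList := by
  rw [← flatMap_def]
  refine (Perm.flatMap_left L fun B hB ↦ (hr B hB).perm).trans ?_
  rw [flatMap_id']
  exact h.perm

lemma card_le_cyclicCount_flatten_map (h : IsBlockPartition P L)
    (hr : ∀ B ∈ L, IsRerouting G B (r B)) (hL : L.length ≤ cyclicCount (Joins G.Adj) L) :
    Fintype.card V ≤ cyclicCount G.Adj (L.map r).flatten := by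
  have hsum : (L.map length).sum ≤ (L.map fun B ↦ stepCount G.Adj (r B) + 1).sum :=
    sum_le_sum fun B hB ↦ by rw [(hr B hB).stepCount_adj]; omega
  rw [sum_map_add, ← List.length_flatten, h.length_flatten, map_const', sum_replicate, smul_eq_mul,
    mul_one] at hsum
  rw [cyclicCount_flatten_map h.ne_nil hr]
  omega

end IsBlockPartition

end Reroute

/-- The path `B` has a rerouting `hi` with many forward arcs and a rerouting `lo` with few forward
arcs. The margin is at least `(|B| - 1) / 3`, cleared here of the division and of the subtraction:
nothing for a single vertex and one arc for four vertices, the two kinds of blocks used. -/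
def IsFlexible (A : V → V → Prop) (B : List V) : Prop :=
  ∃ hi lo, IsRerouting (.fromRel A) B hi ∧ IsRerouting (.fromRel A) B lo ∧
    B.length + 3 * stepCount A lo ≤ 3 * stepCount A hi + 1

lemma isFlexible_singleton (A : V → V → Prop) (v : V) : IsFlexible A [v] :=
  ⟨[v], [v], ⟨.rfl, rfl, rfl, isChain_singleton v⟩, ⟨.rfl, rfl, rfl, isChain_singleton v⟩,
    (Nat.add_comm ..).le⟩

lemma fromRel_adj_iff (hA : IsOriented A) {u v : V} :
    (SimpleGraph.fromRel A).Adj u v ↔ A u v ∨ A v u := by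
  rw [SimpleGraph.fromRel_adj, and_iff_right_iff_imp]
  rintro (h | h)
  exacts [(hA u v h).1, (hA v u h).1.symm]

lemma oreCondition_fromRel [Fintype V] [DecidableRel (SimpleGraph.fromRel A).Adj]
    (hA : IsOriented A) {s : ℕ}
    (h : ∀ u v, u ≠ v → ¬ A u v → ¬ A v u → Fintype.card V + s ≤ deg A u + deg A v) :
    OreCondition (.fromRel A) s := by
  have hdeg (v : V) : (SimpleGraph.fromRel A).degree v = deg A v := by
    rw [← SimpleGraph.card_neighborSet_eq_degree, ← Nat.card_eq_fintype_card, deg]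
    exact Nat.card_congr (.subtypeEquivRight fun u ↦ fromRel_adj_iff hA)
  intro u v huv hadj
  obtain ⟨huv', hvu⟩ := not_or.1 (mt (fromRel_adj_iff hA).2 hadj)
  rw [hdeg, hdeg]
  exact h u v huv huv' hvu

lemma stepCount_fromRel (hA : IsOriented A) (l : List V) :
    stepCount (SimpleGraph.fromRel A).Adj l = stepCount A l + stepCount (fun u v ↦ A v u) l := by
  rw [← stepCount_or fun u v h ↦ (hA u v h).2]
  exact stepCount_congr fun _ _ _ _ ↦ fromRel_adj_iff hA

lemma cyclicCount_fromRel (hA : IsOriented A) (l : List V) :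
    cyclicCount (SimpleGraph.fromRel A).Adj l =
      cyclicCount A l + cyclicCount (fun u v ↦ A v u) l := by
  rw [← cyclicCount_or fun u v h ↦ (hA u v h).2]
  exact cyclicCount_congr fun _ _ _ _ ↦ fromRel_adj_iff hA

lemma IsRerouting.stepCount_add_stepCount_reverse (hA : IsOriented A) {B' : List V}
    (h : IsRerouting (.fromRel A) B B') :
    stepCount A B' + stepCount A B'.reverse = B.length - 1 := by
  rw [stepCount_reverse, ← stepCount_fromRel hA, h.stepCount_adj]

lemma IsFlexible.reverse (hA : IsOriented A) (h : IsFlexible A B) : IsFlexible A B.reverse := by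
  obtain ⟨hi, lo, hhi, hlo, hmargin⟩ := h
  refine ⟨lo.reverse, hi.reverse, hlo.reverse, hhi.reverse, ?_⟩
  have hsumhi := hhi.stepCount_add_stepCount_reverse hA
  have hsumlo := hlo.stepCount_add_stepCount_reverse hA
  rw [length_reverse]
  omega

end FlexibleBlocks

section DisjointFlexibleBlocks

variable {V : Type*} {A : V → V → Prop}

lemma iverson_add_iverson_of_fromRel_adj (hA : IsOriented A) {u v : V}
    (h : (SimpleGraph.fromRel A).Adj u v) : iverson (A u v) + iverson (A v u) = 1 := by
  rw [← iverson_or (hA u v · |>.2), iverson_of_true ((fromRel_adj_iff hA).1 h)]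

/-- With `δ p := [p → b] - [p → c]` and `ε := [b → c] - [c → b]`, the two sides of the inequality
for `p` and `q` differ by `δ p + δ q + ε`. If all three differences vanished, then `2 * δ x = -ε`,
although `ε = ±1`. -/
lemma exists_stepCount_ne_stepCount_swap (hA : IsOriented A) {b c x y z : V}
    (hbc : (SimpleGraph.fromRel A).Adj b c)
    (hx : x ∈ (SimpleGraph.fromRel A).commonNeighbors b c)
    (hy : y ∈ (SimpleGraph.fromRel A).commonNeighbors b c)
    (hz : z ∈ (SimpleGraph.fromRel A).commonNeighbors b c) :
    stepCount A [x, b, c, y] ≠ stepCount A [x, c, b, y] ∨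
      stepCount A [y, b, c, z] ≠ stepCount A [y, c, b, z] ∨
      stepCount A [z, b, c, x] ≠ stepCount A [z, c, b, x] := by
  have hbc := iverson_add_iverson_of_fromRel_adj hA hbc
  have hbx := iverson_add_iverson_of_fromRel_adj hA hx.1
  have hcx := iverson_add_iverson_of_fromRel_adj hA hx.2
  have hby := iverson_add_iverson_of_fromRel_adj hA hy.1
  have hcy := iverson_add_iverson_of_fromRel_adj hA hy.2
  have hbz := iverson_add_iverson_of_fromRel_adj hA hz.1
  have hcz := iverson_add_iverson_of_fromRel_adj hA hz.2
  simp only [stepCount]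
  omega

lemma isFlexible_of_stepCount_ne {b c p q : V} (hbc : (SimpleGraph.fromRel A).Adj b c)
    (hp : p ∈ (SimpleGraph.fromRel A).commonNeighbors b c)
    (hq : q ∈ (SimpleGraph.fromRel A).commonNeighbors b c)
    (hne : stepCount A [p, b, c, q] ≠ stepCount A [p, c, b, q]) :
    IsFlexible A [p, b, c, q] := by
  obtain ⟨hpb, hpc⟩ := hp
  obtain ⟨hbq, hcq⟩ := hq
  rw [SimpleGraph.mem_neighborSet] at hpb hpc hbq hcq
  have hself : IsRerouting (.fromRel A) [p, b, c, q] [p, b, c, q] :=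
    ⟨.rfl, rfl, rfl, by simp [-SimpleGraph.fromRel_adj, hpb.symm, hbc, hcq]⟩
  have hswap : IsRerouting (.fromRel A) [p, b, c, q] [p, c, b, q] :=
    ⟨(Perm.swap b c [q]).cons p, rfl, rfl,
      by simp [-SimpleGraph.fromRel_adj, hpc.symm, hbc.symm, hbq]⟩
  rcases hne.lt_or_gt with hlt | hlt
  · exact ⟨_, _, hswap, hself, by simp only [length_cons, length_nil]; omega⟩
  · exact ⟨_, _, hself, hswap, by simp only [length_cons, length_nil]; omega⟩

lemma exists_isFlexible_of_commonNeighbors (hA : IsOriented A) {b c x y z : V}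
    (hbc : (SimpleGraph.fromRel A).Adj b c)
    (hx : x ∈ (SimpleGraph.fromRel A).commonNeighbors b c)
    (hy : y ∈ (SimpleGraph.fromRel A).commonNeighbors b c)
    (hz : z ∈ (SimpleGraph.fromRel A).commonNeighbors b c)
    (hxy : x ≠ y) (hxz : x ≠ z) (hyz : y ≠ z) :
    ∃ B ⊆ [b, c, x, y, z], B.length = 4 ∧ B.Nodup ∧ IsFlexible A B := by
  have hnodup {p q : V} (hp : p ∈ (SimpleGraph.fromRel A).commonNeighbors b c)
      (hq : q ∈ (SimpleGraph.fromRel A).commonNeighbors b c) (hpq : p ≠ q) :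
      [p, b, c, q].Nodup := by
    rw [SimpleGraph.mem_commonNeighbors] at hp hq
    simp [hp.1.ne', hp.2.ne', hpq, hbc.ne, hq.1.ne, hq.2.ne]
  rcases exists_stepCount_ne_stepCount_swap hA hbc hx hy hz with h | h | h
  · exact ⟨_, by simp, rfl, hnodup hx hy hxy, isFlexible_of_stepCount_ne hbc hx hy h⟩
  · exact ⟨_, by simp, rfl, hnodup hy hz hyz, isFlexible_of_stepCount_ne hbc hy hz h⟩
  · exact ⟨_, by simp, rfl, hnodup hz hx hxz.symm, isFlexible_of_stepCount_ne hbc hz hx h⟩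

section Fintype

variable [Fintype V] {G : SimpleGraph V} [DecidableRel G.Adj]

lemma degree_le_degree_induce_add_card (U : Finset V) [DecidablePred (· ∉ U)]
    (v : {v // v ∉ U}) : G.degree v ≤ (G.induce {v | v ∉ U}).degree v + U.card := by
  classical
  have hsub : G.neighborFinset v ⊆
      ((G.induce {v | v ∉ U}).neighborFinset v).map (.subtype _) ∪ U := by
    intro w hw
    by_cases hU : w ∈ U
    · exact Finset.mem_union_right _ hU
    · refine Finset.mem_union_left _ (Finset.mem_map.2 ⟨⟨w, hU⟩, ?_, rfl⟩)
      simpa using hw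
  rw [← G.card_neighborFinset_eq_degree, ← (G.induce _).card_neighborFinset_eq_degree]
  refine (Finset.card_le_card hsub).trans ((Finset.card_union_le ..).trans_eq ?_)
  rw [Finset.card_map]

lemma degree_add_degree_le_card_add_ncard_commonNeighbors (b c : V) :
    G.degree b + G.degree c ≤ Fintype.card V + (G.commonNeighbors b c).ncard := by
  classical
  have hinter : G.commonNeighbors b c = ↑(G.neighborFinset b ∩ G.neighborFinset c) := by
    simp [SimpleGraph.commonNeighbors_eq]
  rw [hinter, Set.ncard_coe_finset, ← G.card_neighborFinset_eq_degree,
    ← G.card_neighborFinset_eq_degree, ← Finset.card_union_add_card_inter]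
  exact Nat.add_le_add_right (Finset.card_le_univ _) _

namespace OreCondition

variable {s t : ℕ}

lemma mono (hst : s ≤ t) (h : OreCondition G t) : OreCondition G s :=
  fun u v huv hadj ↦ (Nat.add_le_add_left hst _).trans (h u v huv hadj)

lemma induce (U : Finset V) [DecidablePred (· ∉ U)] (h : OreCondition G (s + U.card)) :
    OreCondition (G.induce {v | v ∉ U}) s := by
  intro u v huv hadj
  have hdeg := h u v (Subtype.coe_ne_coe.2 huv) hadj
  have hu := degree_le_degree_induce_add_card (G := G) U u
  have hv := degree_le_degree_induce_add_card (G := G) U v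
  have hcard : Fintype.card {v // v ∉ U} = Fintype.card V - U.card := by
    rw [Fintype.card_subtype_compl, Fintype.card_coe]
  have hU := U.card_le_univ
  change Fintype.card {v // v ∉ U} + s ≤ _
  omega

/-- The vertices of degree below `n / 2 + 2` form a clique. Either this clique has five vertices, or
some edge avoids it. -/
lemma exists_adj_two_lt_ncard_commonNeighbors (h : OreCondition G 4) (hV : 5 ≤ Fintype.card V) :
    ∃ b c, G.Adj b c ∧ 2 < (G.commonNeighbors b c).ncard := by
  classical
  let S : Finset V := {v | 2 * G.degree v < Fintype.card V + 4}
  have hS {u v : V} (hu : u ∈ S) (hv : v ∈ S) (huv : u ≠ v) : G.Adj u v := by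
    by_contra hadj
    have := h u v huv hadj
    simp only [S, Finset.mem_filter_univ] at hu hv
    omega
  have hSc {v : V} (hv : v ∉ S) : Fintype.card V + 4 ≤ 2 * G.degree v := by
    simpa [S] using hv
  rcases le_or_gt 5 S.card with hcard | hcard
  · obtain ⟨b, hb, c, hc, hbc⟩ := Finset.one_lt_card.1 (by omega : 1 < S.card)
    have hsub : ↑(S \ {b, c}) ⊆ G.commonNeighbors b c := by
      intro v hv
      simp only [Finset.coe_sdiff, Finset.coe_pair, Set.mem_sdiff, Finset.mem_coe,
        Set.mem_insert_iff, Set.mem_singleton_iff, not_or] at hv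
      exact ⟨hS hb hv.1 (Ne.symm hv.2.1), hS hc hv.1 (Ne.symm hv.2.2)⟩
    have hle := Set.ncard_le_ncard hsub
    have hsdiff := Finset.le_card_sdiff {b, c} S
    rw [Set.ncard_coe_finset] at hle
    rw [Finset.card_pair hbc] at hsdiff
    exact ⟨b, c, hS hb hc hbc, by omega⟩
  · obtain ⟨b, -, hb⟩ := Finset.exists_mem_notMem_of_card_lt_card
      (by rw [Finset.card_univ]; omega : S.card < Finset.univ.card)
    have hdegb := hSc hb
    obtain ⟨c, hbc, hc⟩ := Finset.exists_mem_notMem_of_card_lt_card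
      (by rw [G.card_neighborFinset_eq_degree]; omega : S.card < (G.neighborFinset b).card)
    have hdegc := hSc hc
    have hcommon := degree_add_degree_le_card_add_ncard_commonNeighbors (G := G) b c
    exact ⟨b, c, (G.mem_neighborFinset b c).1 hbc, by omega⟩

end OreCondition

lemma exists_isFlexible_forall_notMem (hA : IsOriented A)
    [DecidableRel (SimpleGraph.fromRel A).Adj] (U : Finset V)
    (hG : OreCondition (.fromRel A) (4 + U.card)) (hU : U.card + 5 ≤ Fintype.card V) :
    ∃ B, B.length = 4 ∧ B.Nodup ∧ IsFlexible A B ∧ ∀ v ∈ B, v ∉ U := by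
  classical
  have hcard : 5 ≤ Fintype.card {v // v ∉ U} := by
    rw [Fintype.card_subtype_compl, Fintype.card_coe]
    omega
  obtain ⟨b, c, hbc, hcommon⟩ := (hG.induce U).exists_adj_two_lt_ncard_commonNeighbors hcard
  obtain ⟨x, hx, y, hy, z, hz, hxy, hxz, hyz⟩ := (Set.two_lt_ncard).1 hcommon
  obtain ⟨B, hB, hlen, hnodup, hflex⟩ := exists_isFlexible_of_commonNeighbors hA hbc hx hy hz
    (Subtype.coe_ne_coe.2 hxy) (Subtype.coe_ne_coe.2 hxz) (Subtype.coe_ne_coe.2 hyz)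
  refine ⟨B, hlen, hnodup, hflex, fun v hv ↦ ?_⟩
  have hvU := hB hv
  simp only [mem_cons, not_mem_nil, or_false] at hvU
  rcases hvU with rfl | rfl | rfl | rfl | rfl
  exacts [b.2, c.2, x.2, y.2, z.2]

lemma exists_disjoint_isFlexible (hA : IsOriented A) [DecidableRel (SimpleGraph.fromRel A).Adj]
    {k : ℕ} (hG : OreCondition (.fromRel A) (4 * k)) (hV : 4 * k < Fintype.card V) :
    ∃ L : List (List V), L.length = k ∧ L.flatten.length = 4 * k ∧ L.flatten.Nodup ∧
      ∀ B ∈ L, B ≠ [] ∧ IsFlexible A B := by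
  classical
  induction k with
  | zero => exact ⟨[], rfl, rfl, nodup_nil, by simp⟩
  | succ k ih =>
    obtain ⟨L, hlen, hflat, hnodup, hL⟩ := ih (hG.mono (by omega)) (by omega)
    have hU : L.flatten.toFinset.card = 4 * k := (toFinset_card_of_nodup hnodup).trans hflat
    obtain ⟨B, hB4, hBnodup, hBflex, hBU⟩ := exists_isFlexible_forall_notMem hA L.flatten.toFinset
      (hG.mono (by omega)) (by omega)
    have hB : B ≠ [] := by
      rintro rfl
      simp at hB4
    refine ⟨B :: L, by rw [length_cons, hlen], ?_, ?_, forall_mem_cons.2 ⟨⟨hB, hBflex⟩, hL⟩⟩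
    · rw [flatten_cons, length_append, hB4, hflat]
      ring
    · rw [flatten_cons]
      exact hBnodup.append hnodup fun v hv hvL ↦ hBU v hv (mem_toFinset.2 hvL)

lemma IsBlockPartition.exists_of_nodup_flatten {P : List V → Prop} (hP : ∀ v, P [v])
    {L : List (List V)} (hL : ∀ B ∈ L, B ≠ [] ∧ P B) (hnodup : L.flatten.Nodup) :
    ∃ L', IsBlockPartition P L' ∧ L'.length + L.flatten.length = L.length + Fintype.card V := by
  classical
  let M : List V := Finset.univ.toList.filter (· ∉ L.flatten)
  have hM : M.Nodup := (Finset.nodup_toList _).filter _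
  have hdisj : L.flatten.Disjoint M := fun v hv hvM ↦ by simpa [hv] using of_mem_filter hvM
  have hperm : (L.flatten ++ M).Perm Finset.univ.toList := by
    rw [perm_ext_iff_of_nodup (hnodup.append hM hdisj) (Finset.nodup_toList _)]
    intro v
    by_cases hv : v ∈ L.flatten <;> simp [-mem_flatten, M, hv]
  have hlen := hperm.length_eq
  rw [length_append, Finset.length_toList, Finset.card_univ] at hlen
  refine ⟨L ++ M.map ([·]), ⟨?_, ?_, ?_⟩, ?_⟩
  · rwa [flatten_append, ← flatMap_def, flatMap_singleton']
  · exact forall_mem_append.2 ⟨fun B hB ↦ (hL B hB).1, forall_mem_map.2 fun v _ ↦ cons_ne_nil v []⟩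
  · exact forall_mem_append.2 ⟨fun B hB ↦ (hL B hB).2, forall_mem_map.2 fun v _ ↦ hP v⟩
  · rw [length_append, length_map]
    omega

lemma exists_isBlockPartition_isFlexible (hA : IsOriented A)
    [DecidableRel (SimpleGraph.fromRel A).Adj] {k : ℕ}
    (hG : OreCondition (.fromRel A) (4 * k)) (hV : 4 * k < Fintype.card V) :
    ∃ L, IsBlockPartition (IsFlexible A) L ∧ L.length + 3 * k = Fintype.card V := by
  obtain ⟨L, hlen, hflat, hnodup, hL⟩ := exists_disjoint_isFlexible hA hG hV
  obtain ⟨L', hL', hlen'⟩ := IsBlockPartition.exists_of_nodup_flatten (isFlexible_singleton A)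
    hL hnodup
  exact ⟨L', hL', by omega⟩

end Fintype

end DisjointFlexibleBlocks

section HamiltonCycles

variable {V : Type*} {A : V → V → Prop}

lemma exists_zmod_equiv_card_eq_cyclicCount {n : ℕ} (hn : n ≠ 0) {l : List V} (hlen : l.length = n)
    (hl : l.Nodup) (hmem : ∀ v, v ∈ l) :
    ∃ e : ZMod n ≃ V, ∀ R : V → V → Prop,
      Nat.card {i // R (e i) (e (i + 1))} = cyclicCount R l := by
  classical
  obtain ⟨m, rfl⟩ := Nat.exists_eq_succ_of_ne_zero hn
  let e : Fin (m + 1) ≃ V := (finCongr hlen.symm).trans (hl.getEquivOfForallMemList l hmem)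
  have he : ofFn e = l := by
    refine ext_getElem ((length_ofFn ..).trans hlen.symm) fun i _ _ ↦ ?_
    rw [List.getElem_ofFn]
    rfl
  refine ⟨e, fun R ↦ ?_⟩
  rw [← he, cyclicCount_ofFn]
  rfl

variable [Fintype V]

lemma exists_isHamOrientedCycle (hA : IsOriented A) (hV : Fintype.card V ≠ 0) {l : List V}
    (hl : l.Perm Finset.univ.toList)
    (hcycle : Fintype.card V ≤ cyclicCount (SimpleGraph.fromRel A).Adj l) :
    ∃ e, IsHamOrientedCycle A e ∧ sigmaPlus A e = cyclicCount A l ∧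
      Fintype.card V ≤ sigmaPlus A e + sigmaMinus A e := by
  have : NeZero (Fintype.card V) := ⟨hV⟩
  obtain ⟨e, he⟩ := exists_zmod_equiv_card_eq_cyclicCount hV
    (hl.length_eq.trans (Finset.length_toList _)) (hl.nodup_iff.2 (Finset.nodup_toList _))
    (fun v ↦ hl.symm.subset (Finset.mem_toList.2 (Finset.mem_univ v)))
  refine ⟨e, fun i ↦ ?_, he A, ?_⟩
  · by_contra hi
    have hlt := Finite.card_subtype_lt
      (p := fun i ↦ (SimpleGraph.fromRel A).Adj (e i) (e (i + 1))) (mt (fromRel_adj_iff hA).1 hi)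
    rw [he, Nat.card_eq_fintype_card, ZMod.card] at hlt
    omega
  · rw [cyclicCount_fromRel hA, ← he, ← he] at hcycle
    exact hcycle

lemma exists_sigmaMax_ge_of_isBlockPartition (hA : IsOriented A) (hV : Fintype.card V ≠ 0)
    {L : List (List V)} (h : IsBlockPartition (IsFlexible A) L)
    (hL : L.length ≤ cyclicCount (Joins (SimpleGraph.fromRel A).Adj) L) :
    ∃ e, IsHamOrientedCycle A e ∧ 4 * Fintype.card V ≤ 6 * sigmaMax A e + L.length := by
  choose! hi lo hhi hlo hmargin using h.prop
  obtain ⟨e, he, heA, -⟩ := exists_isHamOrientedCycle hA hV (h.perm_flatten_map hhi)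
    (h.card_le_cyclicCount_flatten_map hhi hL)
  obtain ⟨f, hf, hfA, hfcard⟩ := exists_isHamOrientedCycle hA hV (h.perm_flatten_map hlo)
    (h.card_le_cyclicCount_flatten_map hlo hL)
  rw [cyclicCount_flatten_map h.ne_nil hhi] at heA
  rw [cyclicCount_flatten_map h.ne_nil hlo] at hfA
  have hsum := sum_le_sum hmargin
  simp only [sum_map_add, sum_map_mul_left, ← length_flatten, h.length_flatten, map_const',
    sum_replicate, smul_eq_mul, mul_one] at hsum
  have he' : sigmaPlus A e ≤ sigmaMax A e := le_max_left ..
  have hf' : sigmaMinus A f ≤ sigmaMax A f := le_max_right ..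
  rcases le_total (sigmaMax A e) (sigmaMax A f) with hle | hle
  · exact ⟨f, hf, by omega⟩
  · exact ⟨e, he, by omega⟩

lemma sStar_le (A : V → V → Prop) {u v : V}
    (huv : u ≠ v) (h : ¬ A u v) (h' : ¬ A v u) :
    sStar A ≤ deg A u + deg A v - Fintype.card V := by
  rw [sStar, if_pos ⟨u, v, huv, h, h'⟩]
  refine csInf_le ⟨-Fintype.card V, ?_⟩ ⟨u, v, huv, h, h', rfl⟩
  rintro _ ⟨u, v, -, -, -, rfl⟩
  omega

end HamiltonCycles

end HamiltonDiscrepancy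

open HamiltonDiscrepancy in
theorem stmt8_general (k : ℕ) {V : Type*} [Fintype V] (A : V → V → Prop) (hA : IsOriented A)
    (hV : 3 ≤ Fintype.card V) (hn : 4 * k < Fintype.card V)
    (hO : ∀ u v, u ≠ v → ¬ A u v → ¬ A v u → Fintype.card V + 4 * k ≤ deg A u + deg A v) :
    ∃ e : ZMod (Fintype.card V) ≃ V, IsHamOrientedCycle A e ∧
      (Fintype.card V + k + 1) / 2 ≤ sigmaMax A e := by
  classical
  have hG : OreCondition (.fromRel A) (4 * k) := oreCondition_fromRel hA hO
  obtain ⟨L, hL, hlen⟩ := exists_isBlockPartition_isFlexible hA hG hn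
  obtain ⟨L', hL', hlen', hcycle⟩ := hL.exists_cyclicCount_eq_length
    (fun _ ↦ IsFlexible.reverse hA) hG (by omega) (by omega)
  obtain ⟨e, he, hmax⟩ := exists_sigmaMax_ge_of_isBlockPartition hA (by omega) hL' hcycle
  exact ⟨e, he, by omega⟩

/-- If `D` is an oriented graph on `n ≥ 30 + 4(k-1)` vertices with
`s*(D) ≥ 8k`, then `D` has a Hamilton oriented cycle `C` with
`σ_max(C) ≥ ⌈(n+k)/2⌉`. -/
theorem stmt8 (k : ℕ) {V : Type*} [Fintype V] (A : V → V → Prop) (hA : IsOriented A)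
    (hn : 30 + 4 * ((k : ℤ) - 1) ≤ (Fintype.card V : ℤ))
    (hs : 8 * (k : ℤ) ≤ sStar A) :
    ∃ e : ZMod (Fintype.card V) ≃ V, IsHamOrientedCycle A e ∧
      (Fintype.card V + k + 1) / 2 ≤ sigmaMax A e := by
  refine stmt8_general k A hA (by omega) (by omega) fun u v huv h h' ↦ ?_
  have := HamiltonDiscrepancy.sStar_le A huv h h'
  omega
end

section
/- Let D be a semicomplete multipartite digraph containing a 1-path-cycle factor whose path has its initial and terminal vertices in different partite sets. Then D contains a Hamilton path whose initial and terminal vertices belong to different partite sets. -/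
/-- `A` is a semicomplete multipartite digraph with partition map `part`: there are no
loops, and two vertices are joined by at least one arc iff they are in different
partite sets. -/
def IsSemicompleteMultipartite {V : Type*} {p : ℕ} (A : V → V → Prop)
    (part : V → Fin p) : Prop :=
  (∀ v, ¬ A v v) ∧ ∀ u v : V, (A u v ∨ A v u) ↔ part u ≠ part v

/-- `f` lists the vertices of a Hamilton oriented path of the digraph `A`. -/
def IsHamOrientedPath {V : Type*} [Fintype V] (A : V → V → Prop)
    (f : Fin (Fintype.card V) ≃ V) : Prop :=
  ∀ i : ℕ, ∀ h : i + 1 < Fintype.card V,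
    A (f ⟨i, Nat.lt_of_succ_lt h⟩) (f ⟨i + 1, h⟩) ∨
      A (f ⟨i + 1, h⟩) (f ⟨i, Nat.lt_of_succ_lt h⟩)

/-- `f` lists the vertices of a Hamilton (directed) path of the digraph `A`. -/
def IsHamDipath {V : Type*} [Fintype V] (A : V → V → Prop)
    (f : Fin (Fintype.card V) ≃ V) : Prop :=
  ∀ i : ℕ, ∀ h : i + 1 < Fintype.card V,
    A (f ⟨i, Nat.lt_of_succ_lt h⟩) (f ⟨i + 1, h⟩)

/-- Out-degree of `v` in the digraph `F`. -/
noncomputable def outdeg {V : Type*} [Fintype V] (F : V → V → Prop) (v : V) : ℕ :=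
  Nat.card {u : V // F v u}

/-- In-degree of `v` in the digraph `F`. -/
noncomputable def indeg {V : Type*} [Fintype V] (F : V → V → Prop) (v : V) : ℕ :=
  Nat.card {u : V // F u v}

/-- `F` is a 1-path-cycle factor of the digraph `A`: a spanning subdigraph in which
every vertex has in- and out-degree at most one, with exactly one vertex of in-degree 0
and exactly one vertex of out-degree 0; such a subdigraph consists of one directed path
together with a vertex-disjoint collection of directed cycles, covering all vertices. -/
def IsOnePathCycleFactor {V : Type*} [Fintype V] (A F : V → V → Prop) : Prop :=
  (∀ u v, F u v → A u v) ∧ (∀ v, outdeg F v ≤ 1 ∧ indeg F v ≤ 1) ∧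
    (∃! s, indeg F s = 0) ∧ (∃! t, outdeg F t = 0)

/-!
Fix a path `P` from `x` to `y`, with `x` and `y` in different partite sets, and a cycle `C`. It is
enough to arrange the vertices of `P` and `C` as one path with ends in different partite sets, and
then to absorb the cycles of the factor one after the other. Suppose that this is impossible.

If some `a` on `C` dominates `x`, then prefixing `P` by `C` opened after `a` shows that the
successor of `a` lies in the part of `y`, and `x` can be inserted in `C` after `a`. By induction on
the length of `P`, the second vertex of `P` then also lies in the part of `y`. The dual statements
hold when `y` dominates a vertex of `C`. If both happen, `x` and `y` can be inserted in `C`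
together, the rest of `P` again has ends in different partite sets, and induction applies. If, say,
`y` dominates no vertex of `C`, then, walking back along `P`, one of any two consecutive vertices
dominates no vertex of `C`, and `C` can be inserted in `P` just after `x`.
-/

/-- `WalkOn A x y M`: the multiset `M` can be listed as a walk from `x` to `y` in the digraph `A`.
When `M` has no repetitions, such a walk is a path with vertex set `M`. Recording only the multiset
makes rearrangements of walks equalities of sums. -/
inductive WalkOn {V : Type*} (A : V → V → Prop) : V → V → Multiset V → Prop
  | single (x : V) : WalkOn A x x {x}
  | cons {x z y : V} {M : Multiset V} : A x z → WalkOn A z y M → WalkOn A x y ({x} + M)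

/-- `CycleOn A a b M`: the multiset `M` can be listed as a closed walk in the digraph `A` which
runs from `b` to `a` and closes with the arc from `a` to `b`. Rotating the closed walk changes `a`
and `b` but not `M`. -/
structure CycleOn {V : Type*} (A : V → V → Prop) (a b : V) (M : Multiset V) : Prop where
  arc : A a b
  walk : WalkOn A b a M

section Walks

variable {V : Type*} {A : V → V → Prop} {a b c u w x y z : V} {C M N : Multiset V}

namespace WalkOn

lemma left_mem (h : WalkOn A x y M) : x ∈ M := by
  cases h <;> simp

lemma right_mem (h : WalkOn A x y M) : y ∈ M := by
  induction h with
  | single => simp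
  | cons _ _ ih => simp [ih]

lemma append (h : WalkOn A x y M) (hyz : A y z) (h' : WalkOn A z w N) :
    WalkOn A x w (M + N) := by
  induction h with
  | single => exact cons hyz h'
  | cons hxu _ ih => rw [add_assoc]; exact cons hxu (ih hyz)

lemma concat (h : WalkOn A x y M) (hyz : A y z) : WalkOn A x z (M + {z}) :=
  h.append hyz (single z)

lemma reverse (h : WalkOn A x y M) : WalkOn (flip A) y x M := by
  induction h with
  | single x => exact single x
  | cons hxz _ ih => rw [add_comm]; exact ih.concat hxz

lemma exists_cons_of_ne (h : WalkOn A x y M) (hxy : x ≠ y) :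
    ∃ z N, M = {x} + N ∧ A x z ∧ WalkOn A z y N := by
  cases h with
  | single => exact absurd rfl hxy
  | cons hxz h => exact ⟨_, _, rfl, hxz, h⟩

lemma eq_singleton_or_exists_concat (h : WalkOn A x y M) :
    (x = y ∧ M = {y}) ∨ ∃ z N, M = N + {y} ∧ WalkOn A x z N ∧ A z y := by
  cases h.reverse with
  | single => exact .inl ⟨rfl, rfl⟩
  | cons hzy hz => exact .inr ⟨_, _, add_comm _ _, hz.reverse, hzy⟩

lemma eq_left_or_exists_split (h : WalkOn A x y M) (hc : c ∈ M) :
    c = x ∨ ∃ u M₁ M₂, M = M₁ + M₂ ∧ WalkOn A x u M₁ ∧ A u c ∧ WalkOn A c y M₂ := by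
  induction h with
  | single => exact .inl (Multiset.mem_singleton.1 hc)
  | @cons x _ _ _ hxz h ih =>
    rcases Multiset.mem_add.1 hc with hc | hc
    · exact .inl (Multiset.mem_singleton.1 hc)
    rcases ih hc with rfl | ⟨u, M₁, M₂, rfl, h₁, huc, h₂⟩
    · exact .inr ⟨x, {x}, _, rfl, single x, hxz, h⟩
    · exact .inr ⟨u, {x} + M₁, M₂, (add_assoc _ _ _).symm, cons hxz h₁, huc, h₂⟩

lemma exists_list (h : WalkOn A x y M) :
    ∃ L : List V, (L : Multiset V) = M ∧ L.IsChain A ∧ L.head? = some x ∧ L.getLast? = some y := by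
  induction h with
  | single x => exact ⟨[x], by simp⟩
  | @cons x z y M hxz h ih =>
    obtain ⟨L, rfl, hchain, hhead, hlast⟩ := ih
    refine ⟨x :: L, by simp, ?_, rfl, by simp [List.getLast?_cons, hlast]⟩
    exact List.isChain_cons.2 ⟨fun u hu => by simp_all, hchain⟩

lemma of_seq (f : ℕ → V) {k : ℕ} (h : ∀ i < k, A (f i) (f (i + 1))) :
    WalkOn A (f 0) (f k) ((Multiset.range (k + 1)).map f) := by
  induction k with
  | zero => exact single (f 0)
  | succ k ih =>
    rw [Multiset.range_succ, Multiset.map_cons, ← Multiset.singleton_add, add_comm {_}]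
    exact (ih fun i hi => h i (by omega)).concat (h k (by omega))

lemma insert_cycle (h₁ : WalkOn A x u M) (h₂ : WalkOn A w y N) (hC : CycleOn A a b C)
    (hub : A u b) (haw : A a w) : WalkOn A x y (M + N + C) := by
  convert h₁.append hub (hC.walk.append haw h₂) using 1
  abel

end WalkOn

namespace CycleOn

lemma reverse (h : CycleOn A a b C) : CycleOn (flip A) b a C :=
  ⟨h.arc, h.walk.reverse⟩

lemma eq_target_or_exists_split (h : CycleOn A a b C) (hc : c ∈ C) :
    c = b ∨ ∃ u M N, C = M + N ∧ WalkOn A b u M ∧ WalkOn A c a N ∧ CycleOn A u c C := by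
  refine (h.walk.eq_left_or_exists_split hc).imp_right ?_
  rintro ⟨u, M, N, rfl, hM, huc, hN⟩
  exact ⟨u, M, N, rfl, hM, hN, huc, add_comm N M ▸ hN.append h.arc hM⟩

lemma exists_pred (h : CycleOn A a b C) (hc : c ∈ C) : ∃ u, CycleOn A u c C := by
  rcases h.eq_target_or_exists_split hc with rfl | ⟨u, _, _, _, _, _, hu⟩
  · exact ⟨a, h⟩
  · exact ⟨u, hu⟩

lemma exists_succ (h : CycleOn A a b C) (hc : c ∈ C) : ∃ u, CycleOn A c u C :=
  (h.reverse.exists_pred hc).imp fun _ hu => hu.reverse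

lemma source_mem (h : CycleOn A a b C) : a ∈ C :=
  h.walk.right_mem

lemma target_mem (h : CycleOn A a b C) : b ∈ C :=
  h.walk.left_mem

lemma insert_vertex (h : CycleOn A a b C) (hax : A a x) (hxb : A x b) :
    CycleOn A a x ({x} + C) :=
  ⟨hax, .cons hxb h.walk⟩

lemma insert_two (h : CycleOn A a b C) (hax : A a x) (hxb : A x b) (hc : c ∈ C) (hcb : c ≠ b)
    (hyc : A y c) (hpred : ∀ u, CycleOn A u c C → A u y) :
    CycleOn A a x ({x} + ({y} + C)) := by
  obtain rfl | ⟨u, M, N, rfl, hM, hN, huc⟩ := h.eq_target_or_exists_split hc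
  · exact absurd rfl hcb
  · have hwalk : WalkOn A b a (M + ({y} + N)) := hM.append (hpred u huc) (.cons hyc hN)
    rw [add_left_comm {y} M N]
    exact ⟨hax, .cons hxb hwalk⟩

end CycleOn

end Walks

/-- `A` is a semicomplete multipartite digraph whose partite sets are the fibres of `part`. Taking
`u = v` shows that there are no loops. -/
def IsSemicompletePartition {V ι : Type*} (A : V → V → Prop) (part : V → ι) : Prop :=
  ∀ u v, (A u v ∨ A v u) ↔ part u ≠ part v

/-- The multiset `M` can be listed as a walk of `A` whose ends lie in different partite sets. -/
def HasMixedWalk {V ι : Type*} (A : V → V → Prop) (part : V → ι) (M : Multiset V) : Prop :=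
  ∃ x y, part x ≠ part y ∧ WalkOn A x y M

section Merging

variable {V ι : Type*} {A : V → V → Prop} {part : V → ι}
  {a b c d u v w x y z : V} {C M N P Q : Multiset V}

namespace IsSemicompletePartition

lemma part_ne (hA : IsSemicompletePartition A part) (h : A u v) : part u ≠ part v :=
  (hA u v).1 (.inl h)

lemma adj_of_not_adj (hA : IsSemicompletePartition A part) (hne : part u ≠ part v)
    (h : ¬ A v u) : A u v :=
  ((hA u v).2 hne).resolve_right h

lemma reverse (hA : IsSemicompletePartition A part) : IsSemicompletePartition (flip A) part :=
  fun u v => or_comm.trans (hA u v)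

lemma exists_arc_part_ne (hA : IsSemicompletePartition A part) (hC : CycleOn A c d C) {α β : ι}
    (hαβ : α ≠ β) : ∃ a b, CycleOn A a b C ∧ part a ≠ α ∧ part b ≠ β := by
  by_contra! hcon
  have part_eq : ∀ a ∈ C, part a = α := by
    intro a ha
    by_contra hne
    obtain ⟨b, hab⟩ := hC.exists_succ ha
    obtain ⟨b', hbb'⟩ := hC.exists_succ hab.target_mem
    have hb : part b = β := hcon a b hab hne
    have hb' : part b' = β := hcon b b' hbb' (hb.trans_ne hαβ.symm)
    exact hA.part_ne hbb'.arc (hb.trans hb'.symm)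
  exact hA.part_ne hC.arc ((part_eq c hC.source_mem).trans (part_eq d hC.target_mem).symm)

end IsSemicompletePartition

lemma HasMixedWalk.of_reverse (h : HasMixedWalk (flip A) part M) : HasMixedWalk A part M := by
  obtain ⟨x, y, hxy, hwalk⟩ := h
  exact ⟨y, x, hxy.symm, hwalk.reverse⟩

lemma part_succ_eq_and_adj_of_adj_initial (hA : IsSemicompletePartition A part)
    (hP : WalkOn A x y P) (hxy : part x ≠ part y) (hG : ¬ HasMixedWalk A part (P + C))
    (hab : CycleOn A a b C) (hax : A a x) : part b = part y ∧ A x b := by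
  have part_succ : ∀ {a b}, CycleOn A a b C → A a x → part b = part y := by
    intro a b hab hax
    by_contra hne
    exact hG ⟨b, y, hne, add_comm C P ▸ hab.walk.append hax hP⟩
  have hb : part b = part y := part_succ hab hax
  refine ⟨hb, hA.adj_of_not_adj (hb ▸ hxy) fun hbx => ?_⟩
  obtain ⟨b', hbb'⟩ := hab.exists_succ hab.target_mem
  exact hA.part_ne hbb'.arc (hb.trans (part_succ hbb' hbx).symm)

lemma adj_terminal_of_terminal_adj_succ (hA : IsSemicompletePartition A part)
    (hP : WalkOn A x y P) (hxy : part x ≠ part y) (hG : ¬ HasMixedWalk A part (P + C))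
    (hab : CycleOn A a b C) (hyb : A y b) : A a y :=
  (part_succ_eq_and_adj_of_adj_initial hA.reverse hP.reverse hxy.symm
    (mt HasMixedWalk.of_reverse hG) hab.reverse hyb).2

lemma cycleOn_insert_initial (hA : IsSemicompletePartition A part) (hP : WalkOn A x y P)
    (hxy : part x ≠ part y) (hG : ¬ HasMixedWalk A part (P + C)) (hC : CycleOn A c d C)
    (ha : a ∈ C) (hax : A a x) : CycleOn A a x ({x} + C) := by
  obtain ⟨b, hab⟩ := hC.exists_succ ha
  exact hab.insert_vertex hax (part_succ_eq_and_adj_of_adj_initial hA hP hxy hG hab hax).2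

lemma cycleOn_insert_terminal (hA : IsSemicompletePartition A part) (hP : WalkOn A x y P)
    (hxy : part x ≠ part y) (hG : ¬ HasMixedWalk A part (P + C)) (hC : CycleOn A c d C)
    (hb : b ∈ C) (hyb : A y b) : CycleOn A y b ({y} + C) :=
  (cycleOn_insert_initial hA.reverse hP.reverse hxy.symm (mt HasMixedWalk.of_reverse hG)
    hC.reverse hb hyb).reverse

lemma cycleOn_insert_ends (hA : IsSemicompletePartition A part) (hP : WalkOn A x y P)
    (hxy : part x ≠ part y) (hG : ¬ HasMixedWalk A part (P + C)) (hC : CycleOn A c d C)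
    (ha : a ∈ C) (hax : A a x) (hb : b ∈ C) (hyb : A y b) :
    CycleOn A a x ({x} + ({y} + C)) := by
  obtain ⟨a', haa'⟩ := hC.exists_succ ha
  obtain ⟨ha', hxa'⟩ := part_succ_eq_and_adj_of_adj_initial hA hP hxy hG haa' hax
  have hba' : b ≠ a' := by
    rintro rfl
    exact hA.part_ne hyb ha'.symm
  exact haa'.insert_two hax hxa' hb hba' hyb fun u hub =>
    adj_terminal_of_terminal_adj_succ hA hP hxy hG hub hyb

lemma WalkOn.no_arc_to_cycle_or_of_succ_succ (hA : IsSemicompletePartition A part)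
    (hM : WalkOn A x u M) (huv : A u v) (hvw : A v w) (hN : WalkOn A w y N) (hC : CycleOn A a b C)
    (hmerge : ¬ WalkOn A x y (M + ({v} + N) + C)) (hw : ∀ c ∈ C, ¬ A w c) :
    (∀ c ∈ C, ¬ A u c) ∨ ∀ c ∈ C, ¬ A v c := by
  by_contra! ⟨⟨d, hd, hud⟩, b, hb, hvb⟩
  obtain ⟨c, hcd⟩ := hC.exists_pred hd
  -- `C` as a whole fits neither between `u` and `v` nor between `v` and `w`. It is cut in two: from
  -- `d` to the predecessor of `b` it fits between `u` and `v`, from `b` to `c` between `v` and `w`.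
  have part_source : ∀ {a b}, CycleOn A a b C → A v b → part a = part w := by
    intro a b hab hvb
    by_contra hne
    refine hmerge ?_
    rw [← add_assoc]
    exact (hM.concat huv).insert_cycle hN hab hvb
      (hA.adj_of_not_adj hne (hw a hab.source_mem))
  have adj_mid : ∀ {a}, a ∈ C → part a = part w → A a v := by
    intro a ha hpart
    refine hA.adj_of_not_adj (hpart ▸ (hA.part_ne hvw).symm) fun hva => ?_
    obtain ⟨a', ha'⟩ := hC.exists_pred ha
    exact hA.part_ne ha'.arc ((part_source ha' hva).trans hpart.symm)
  have hcw_ne : part c ≠ part w := fun hpart =>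
    hmerge (hM.insert_cycle (.cons hvw hN) hcd hud (adj_mid hcd.source_mem hpart))
  have hcw : A c w := hA.adj_of_not_adj hcw_ne (hw c hcd.source_mem)
  rcases hcd.eq_target_or_exists_split hb with rfl | ⟨a, S, T, rfl, hS, hT, hab⟩
  · exact hcw_ne (part_source hcd hvb)
  · have hav : A a v := adj_mid hab.source_mem (part_source hab hvb)
    apply hmerge
    convert hM.append hud (hS.append hav (.cons hvb (hT.append hcw hN))) using 1
    abel

lemma WalkOn.no_arc_to_cycle_or (hA : IsSemicompletePartition A part) (hM : WalkOn A x u M)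
    (huv : A u v) (hN : WalkOn A v y N) (hC : CycleOn A a b C)
    (hmerge : ¬ WalkOn A x y (M + N + C)) (hy : ∀ c ∈ C, ¬ A y c) :
    (∀ c ∈ C, ¬ A u c) ∨ ∀ c ∈ C, ¬ A v c := by
  induction hN generalizing u M with
  | single => exact .inr hy
  | cons hvw hN ih =>
    rcases ih (hM.concat huv) hvw (by rwa [add_assoc M]) hy with hv | hw
    · exact .inr hv
    · exact hM.no_arc_to_cycle_or_of_succ_succ hA huv hvw hN hC hmerge hw

lemma hasMixedWalk_of_terminal_no_arc (hA : IsSemicompletePartition A part) (hxz : A x z)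
    (hQ : WalkOn A z y Q) (hC : CycleOn A c d C) (hxy : part x ≠ part y)
    (hy : ∀ c ∈ C, ¬ A y c) (hz : ∀ c ∈ C, A c x → part z = part y) :
    HasMixedWalk A part ({x} + Q + C) := by
  by_contra hG
  have hmerge : ¬ WalkOn A x y ({x} + Q + C) := fun h => hG ⟨x, y, hxy, h⟩
  obtain ⟨a, b, hab, hxb, haz⟩ : ∃ a b, CycleOn A a b C ∧ A x b ∧ part a ≠ part z := by
    by_cases hx : ∃ a ∈ C, A a x
    · obtain ⟨a, ha, hax⟩ := hx
      obtain ⟨b, hab⟩ := hC.exists_succ ha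
      obtain ⟨hb, hxb⟩ := part_succ_eq_and_adj_of_adj_initial hA (.cons hxz hQ) hxy hG hab hax
      exact ⟨a, b, hab, hxb, (hb.trans (hz a ha hax).symm) ▸ hA.part_ne hab.arc⟩
    · push Not at hx
      obtain ⟨a, b, hab, haz, hbx⟩ := hA.exists_arc_part_ne hC (hA.part_ne hxz).symm
      exact ⟨a, b, hab, hA.adj_of_not_adj hbx.symm (hx b hab.target_mem), haz⟩
  rcases (WalkOn.single x).no_arc_to_cycle_or hA hxz hQ hC hmerge hy with hx' | hz'
  · exact hx' b hab.target_mem hxb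
  · have haz' : A a z := hA.adj_of_not_adj haz (hz' a hab.source_mem)
    exact hmerge ((WalkOn.single x).insert_cycle hQ hab hxb haz')

lemma hasMixedWalk_of_initial_no_arc (hA : IsSemicompletePartition A part) (hQ : WalkOn A x v Q)
    (hvy : A v y) (hC : CycleOn A c d C) (hxy : part x ≠ part y)
    (hx : ∀ c ∈ C, ¬ A c x) (hv : ∀ c ∈ C, A y c → part v = part x) :
    HasMixedWalk A part ({y} + Q + C) :=
  .of_reverse <|
    hasMixedWalk_of_terminal_no_arc hA.reverse hvy hQ.reverse hC.reverse hxy.symm hx hv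

theorem hasMixedWalk_add_cycle (hA : IsSemicompletePartition A part) (hP : WalkOn A x y P)
    (hxy : part x ≠ part y) (hC : CycleOn A c d C) : HasMixedWalk A part (P + C) := by
  induction hn : P.card using Nat.strong_induction_on generalizing x y c d P C with | _ n ih
  subst hn
  by_contra hG
  have part_second : ∀ {z Q}, P = {x} + Q → WalkOn A z y Q → ∀ a ∈ C, A a x →
      part z = part y := by
    rintro z Q rfl hQ a ha hax
    by_contra hzy
    have hcycle : CycleOn A a x ({x} + C) := cycleOn_insert_initial hA hP hxy hG hC ha hax
    refine hG ?_
    rw [add_assoc, add_left_comm]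
    exact ih _ (by simp) hQ hzy hcycle rfl
  have part_penultimate : ∀ {v Q}, P = {y} + Q → WalkOn A x v Q → ∀ b ∈ C, A y b →
      part v = part x := by
    rintro v Q rfl hQ b hb hyb
    by_contra hvx
    have hcycle : CycleOn A y b ({y} + C) := cycleOn_insert_terminal hA hP hxy hG hC hb hyb
    refine hG ?_
    rw [add_assoc, add_left_comm]
    exact ih _ (by simp) hQ (Ne.symm hvx) hcycle rfl
  obtain ⟨z, Q, rfl, hxz, hQ⟩ := hP.exists_cons_of_ne (ne_of_apply_ne part hxy)
  by_cases! hy : ∀ b ∈ C, ¬ A y b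
  · exact hG (hasMixedWalk_of_terminal_no_arc hA hxz hQ hC hxy hy (part_second rfl hQ))
  by_cases! hx : ∀ a ∈ C, ¬ A a x
  · obtain ⟨v, R, hPR, hvy, hR⟩ := hP.reverse.exists_cons_of_ne (ne_of_apply_ne part hxy.symm)
    exact hG (hPR ▸ hasMixedWalk_of_initial_no_arc hA hR.reverse hvy hC hxy hx
      (part_penultimate hPR hR.reverse))
  obtain ⟨a, ha, hax⟩ := hx
  obtain ⟨b, hb, hyb⟩ := hy
  have hcycle : CycleOn A a x ({x} + ({y} + C)) :=
    cycleOn_insert_ends hA hP hxy hG hC ha hax hb hyb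
  rcases hQ.eq_singleton_or_exists_concat with ⟨rfl, rfl⟩ | ⟨v, R, rfl, hR, -⟩
  · exact hG ⟨x, a, (hA.part_ne hax).symm, add_assoc {x} {z} C ▸ hcycle.walk⟩
  · have hz : part z = part y := part_second rfl hQ a ha hax
    have hv : part v = part x := part_penultimate (by abel) (.cons hxz hR) b hb hyb
    have hzv : part z ≠ part v := hz ▸ hv ▸ hxy.symm
    have hsum : {x} + (R + {y}) + C = R + ({x} + ({y} + C)) := by abel
    refine hG ?_
    rw [hsum]
    exact ih _ (by simp) hR hzv hcycle rfl

end Merging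

section Permutations

variable {V : Type*}

lemma exists_perm_closing_path [Finite V] {F : V → V → Prop} {s t : V}
    (hin : ∀ {u u' v}, F u v → F u' v → u = u') (hs : ∀ u, ¬ F u s) (ht : ∀ v ≠ t, ∃ u, F v u) :
    ∃ σ : Equiv.Perm V, σ t = s ∧ ∀ v ≠ t, F v (σ v) := by
  classical
  choose! g hg using ht
  let f : V → V := Function.update g t s
  have hft : f t = s := Function.update_self ..
  have hf : ∀ v ≠ t, F v (f v) := fun v hv => by
    simpa only [f, Function.update_of_ne hv] using hg v hv
  have hinj : Function.Injective f := by
    intro u v huv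
    by_cases hu : u = t <;> by_cases hv : v = t
    · rw [hu, hv]
    · exact absurd (hf v hv) (by rw [← huv, hu, hft]; exact hs v)
    · exact absurd (hf u hu) (by rw [huv, hv, hft]; exact hs u)
    · exact hin (hf u hu) (huv ▸ hf v hv)
  exact ⟨.ofBijective f (Finite.injective_iff_bijective.1 hinj), hft, hf⟩

variable [Fintype V]

/-- The vertices of the cycle of `σ` through `v`. Unlike `(σ.cycleOf v).support`, it is `{v}` when
`v` is a fixed point. -/
noncomputable def cycleVertices (σ : Equiv.Perm V) (v : V) : Finset V :=
  open Classical in {w | σ.SameCycle v w}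

lemma mem_cycleVertices {σ : Equiv.Perm V} {v w : V} :
    w ∈ cycleVertices σ v ↔ σ.SameCycle v w := by
  simp [cycleVertices]

lemma cycleVertices_val (σ : Equiv.Perm V) (v : V) :
    (cycleVertices σ v).val =
      (Multiset.range (Function.minimalPeriod σ v)).map fun i => σ^[i] v := by
  have hinj : ∀ i ∈ Multiset.range (Function.minimalPeriod σ v),
      ∀ j ∈ Multiset.range (Function.minimalPeriod σ v), σ^[i] v = σ^[j] v → i = j := by
    intro i hi j hj h
    exact Function.iterate_injOn_Iio_minimalPeriod (Multiset.mem_range.1 hi)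
      (Multiset.mem_range.1 hj) h
  refine (Multiset.Nodup.ext (Finset.nodup _) ((Multiset.nodup_range _).map_on hinj)).2 fun w => ?_
  rw [Finset.mem_val, mem_cycleVertices, Multiset.mem_map]
  constructor
  · intro h
    obtain ⟨i, rfl⟩ := h.exists_nat_pow_eq
    have hpos : 0 < Function.minimalPeriod σ v :=
      Function.minimalPeriod_pos_of_mem_periodicPts (σ.injective.mem_periodicPts v)
    refine ⟨i % _, Multiset.mem_range.2 (Nat.mod_lt i hpos), ?_⟩
    rw [Function.iterate_mod_minimalPeriod_eq, Equiv.Perm.iterate_eq_pow]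
  · rintro ⟨i, -, rfl⟩
    exact ⟨i, by rw [Equiv.Perm.iterate_eq_pow, zpow_natCast]⟩

lemma walkOn_cycleVertices {A : V → V → Prop} {σ : Equiv.Perm V} {v : V}
    (h : ∀ w, σ.SameCycle v w → σ w ≠ v → A w (σ w)) :
    WalkOn A v (σ.symm v) (cycleVertices σ v).val := by
  obtain ⟨k, hk⟩ : ∃ k, Function.minimalPeriod σ v = k + 1 :=
    Nat.exists_eq_succ_of_ne_zero
      (Function.minimalPeriod_pos_of_mem_periodicPts (σ.injective.mem_periodicPts v)).ne'
  have hlast : σ^[k] v = σ.symm v := by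
    rw [Equiv.eq_symm_apply, ← Function.iterate_succ_apply' σ k v, Nat.succ_eq_add_one, ← hk]
    exact Function.iterate_minimalPeriod
  rw [cycleVertices_val, hk, ← hlast]
  refine WalkOn.of_seq (fun i => σ^[i] v) fun i hi => ?_
  rw [Function.iterate_succ_apply' σ i v]
  refine h _ ⟨i, by rw [Equiv.Perm.iterate_eq_pow, zpow_natCast]⟩ ?_
  rw [← Function.iterate_succ_apply' σ i v]
  exact Function.not_isPeriodicPt_of_pos_of_lt_minimalPeriod i.succ_ne_zero (by omega)

variable {ι : Type*} {A : V → V → Prop} {part : V → ι}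

theorem hasMixedWalk_univ_of_perm (hA : IsSemicompletePartition A part) {σ : Equiv.Perm V}
    {t : V} (hends : part (σ t) ≠ part t) (hσ : ∀ v ≠ t, A v (σ v)) :
    HasMixedWalk A part (Finset.univ : Finset V).val := by
  let Covered (S : Finset V) : Prop :=
    t ∈ S ∧ (∀ v w, σ.SameCycle v w → v ∈ S → w ∈ S) ∧ HasMixedWalk A part S.val
  have hpath : Covered (cycleVertices σ (σ t)) := by
    refine ⟨mem_cycleVertices.2 (Equiv.Perm.sameCycle_apply_left.2 (.refl σ t)), ?_,
      σ t, t, hends, ?_⟩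
    · intro v w hvw hv
      exact mem_cycleVertices.2 ((mem_cycleVertices.1 hv).trans hvw)
    · simpa only [Equiv.symm_apply_apply] using
        walkOn_cycleVertices (v := σ t) fun w _ hw => hσ w fun h => hw (h ▸ rfl)
  obtain ⟨S, -, ⟨htS, hclosed, x, y, hxy, hwalk⟩, hmax⟩ :=
    exists_maximal_ge_of_wellFoundedGT Covered _ hpath
  suffices hS : S = Finset.univ from hS ▸ ⟨x, y, hxy, hwalk⟩
  by_contra hS
  obtain ⟨v, hv⟩ : ∃ v, v ∉ S := by simpa [Finset.eq_univ_iff_forall] using hS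
  have hdisj : Disjoint S (cycleVertices σ v) := Finset.disjoint_right.2 fun w hw hwS =>
    hv (hclosed w v (mem_cycleVertices.1 hw).symm hwS)
  have hcycle : CycleOn A (σ.symm v) v (cycleVertices σ v).val := by
    have harc : ∀ w, σ.SameCycle v w → A w (σ w) := fun w hw =>
      hσ w fun h => hv (hclosed t v (h ▸ hw.symm) htS)
    refine ⟨?_, walkOn_cycleVertices fun w hw _ => harc w hw⟩
    simpa only [Equiv.apply_symm_apply] using
      harc (σ.symm v) (Equiv.Perm.sameCycle_symm_apply_right.2 (.refl σ v))
  have hbigger : Covered (S.disjUnion _ hdisj) := by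
    refine ⟨Finset.mem_disjUnion.2 (.inl htS), ?_, hasMixedWalk_add_cycle hA hwalk hxy hcycle⟩
    intro u w huw hu
    simp only [Finset.mem_disjUnion, mem_cycleVertices] at hu ⊢
    exact hu.imp (hclosed u w huw) fun h => h.trans huw
  exact hv (hmax hbigger (Finset.subset_def.2 fun w hw => Finset.mem_disjUnion.2 (.inl hw))
    (Finset.mem_disjUnion.2 (.inr (mem_cycleVertices.2 (.refl σ v)))))

end Permutations

section Factors

variable {V : Type*} [Fintype V] {A F : V → V → Prop}

lemma indeg_eq_zero_iff {v : V} : indeg F v = 0 ↔ ∀ u, ¬ F u v := by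
  rw [indeg, Finite.card_eq_zero_iff, isEmpty_subtype]

lemma outdeg_eq_zero_iff {v : V} : outdeg F v = 0 ↔ ∀ u, ¬ F v u := by
  rw [outdeg, Finite.card_eq_zero_iff, isEmpty_subtype]

lemma eq_of_indeg_le_one {u u' v : V} (hv : indeg F v ≤ 1) (hu : F u v) (hu' : F u' v) :
    u = u' :=
  congrArg Subtype.val
    ((Finite.card_le_one_iff_subsingleton.1 hv).elim (⟨u, hu⟩ : {u // F u v}) ⟨u', hu'⟩)

lemma IsOnePathCycleFactor.exists_perm (hF : IsOnePathCycleFactor A F) :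
    ∃ (σ : Equiv.Perm V) (t : V), indeg F (σ t) = 0 ∧ outdeg F t = 0 ∧ ∀ v ≠ t, A v (σ v) := by
  obtain ⟨hFA, hdeg, ⟨s, hs, -⟩, ⟨t, ht, ht_unique⟩⟩ := hF
  have hout : ∀ v ≠ t, ∃ u, F v u := by
    intro v hv
    by_contra! h
    exact hv (ht_unique v (outdeg_eq_zero_iff.2 h))
  obtain ⟨σ, hσt, hσ⟩ := exists_perm_closing_path (fun {_ _ v} => eq_of_indeg_le_one (hdeg v).2)
    (indeg_eq_zero_iff.1 hs) hout
  exact ⟨σ, t, hσt ▸ hs, ht, fun v hv => hFA _ _ (hσ v hv)⟩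

lemma WalkOn.exists_isHamDipath {x y : V} (h : WalkOn A x y (Finset.univ : Finset V).val) :
    ∃ f : Fin (Fintype.card V) ≃ V, IsHamDipath A f ∧ ∀ h0 : 0 < Fintype.card V,
      f ⟨0, h0⟩ = x ∧ f ⟨Fintype.card V - 1, Nat.sub_lt h0 one_pos⟩ = y := by
  classical
  obtain ⟨L, hL, hchain, hhead, hlast⟩ := h.exists_list
  have hnodup : L.Nodup := Multiset.coe_nodup.1 (hL ▸ Finset.nodup _)
  have hmem : ∀ v, v ∈ L := fun v => Multiset.mem_coe.1 (hL ▸ Finset.mem_univ_val v)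
  have hlen : Fintype.card V = L.length := by
    rw [← Multiset.coe_card, hL, Finset.card_val, Finset.card_univ]
  refine ⟨(finCongr hlen).trans (hnodup.getEquivOfForallMemList L hmem), fun i hi => ?_,
    fun h0 => ⟨?_, ?_⟩⟩
  · simpa using List.isChain_iff_getElem.1 hchain i (hlen ▸ hi)
  · rw [List.head?_eq_getElem?] at hhead
    simpa using (List.getElem?_eq_some_iff.1 hhead).2
  · rw [List.getLast?_eq_getElem?] at hlast
    simpa [hlen] using (List.getElem?_eq_some_iff.1 hlast).2

end Factors

theorem stmt12_general {V ι : Type*} [Fintype V] {A F : V → V → Prop} {part : V → ι}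
    (hA : IsSemicompletePartition A part) (hF : IsOnePathCycleFactor A F)
    (hends : ∀ s t : V, indeg F s = 0 → outdeg F t = 0 → part s ≠ part t) :
    ∃ f : Fin (Fintype.card V) ≃ V, IsHamDipath A f ∧
      ∀ h0 : 0 < Fintype.card V,
        part (f ⟨0, h0⟩) ≠ part (f ⟨Fintype.card V - 1, Nat.sub_lt h0 one_pos⟩) := by
  obtain ⟨σ, t, hs, ht, hσ⟩ := hF.exists_perm
  obtain ⟨x, y, hxy, hwalk⟩ := hasMixedWalk_univ_of_perm hA (hends _ _ hs ht) hσ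
  obtain ⟨f, hf, hf_ends⟩ := hwalk.exists_isHamDipath
  refine ⟨f, hf, fun h0 => ?_⟩
  rwa [(hf_ends h0).1, (hf_ends h0).2]

/-- if a semicomplete multipartite digraph has a 1-path-cycle factor
whose path has initial and terminal vertices in different partite sets, then it has a
Hamilton directed path whose initial and terminal vertices are in different partite
sets. (The initial vertex of the path of a 1-path-cycle factor is its unique vertex of
in-degree 0, the terminal vertex its unique vertex of out-degree 0.) -/
theorem stmt12 {V : Type*} [Fintype V] [Nonempty V] {p : ℕ} (hp : 2 ≤ p)
    (A : V → V → Prop) (part : V → Fin p)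
    (hsmd : IsSemicompleteMultipartite A part) (hne : Function.Surjective part)
    (F : V → V → Prop) (hF : IsOnePathCycleFactor A F)
    (hends : ∀ s t : V, indeg F s = 0 → outdeg F t = 0 → part s ≠ part t) :
    ∃ f : Fin (Fintype.card V) ≃ V, IsHamDipath A f ∧
      ∀ h0 : 0 < Fintype.card V,
        part (f ⟨0, h0⟩) ≠ part (f ⟨Fintype.card V - 1, Nat.sub_lt h0 one_pos⟩) :=
  stmt12_general hsmd.2 hF hends
end

section
/- Let D be a connected locally semicomplete digraph on n ≥ 3 vertices that is not strong, with acyclic ordering of strong components C₁,…,C_ℓ. If the underlying graph U(D) is 2-connected, then D has a Hamilton oriented cycle R containing a shortest directed (C₁,C_ℓ)-path P as a subpath such that the backward arcs of R are exactly the arcs of P; in particular σ_max(R) = n − d(C₁,C_ℓ). -/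
/-- `A` is a locally semicomplete digraph: the out-neighbourhood and the
in-neighbourhood of each vertex induce semicomplete digraphs. -/
def LocallySemicomplete {V : Type*} (A : V → V → Prop) : Prop :=
  ∀ x u v : V, u ≠ v →
    (A x u → A x v → A u v ∨ A v u) ∧ (A u x → A v x → A u v ∨ A v u)

/-- The digraph `A` is connected (its underlying graph is connected). -/
def DigraphConnected {V : Type*} (A : V → V → Prop) : Prop :=
  ∀ u v : V, Relation.ReflTransGen (fun a b => A a b ∨ A b a) u v

/-- The digraph `A` is strongly connected. -/
def DigraphStrong {V : Type*} (A : V → V → Prop) : Prop :=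
  ∀ u v : V, Relation.ReflTransGen A u v

/-- `comp : V → Fin ℓ` is the acyclic ordering of the strong components of `A`:
its fibres are the strong components and no arc goes backwards. -/
def IsAcyclicOrdering {V : Type*} (A : V → V → Prop) {ℓ : ℕ} (comp : V → Fin ℓ) : Prop :=
  Function.Surjective comp ∧
    (∀ u v : V, comp u = comp v ↔
      (Relation.ReflTransGen A u v ∧ Relation.ReflTransGen A v u)) ∧
    (∀ u v : V, A u v → comp u ≤ comp v)

/-- `l` lists the vertices of an `(S,T)`-path for the relation `R`: the first vertex is
in `S`, the last in `T`, and the internal vertices avoid `S ∪ T`. -/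
def IsSTPathList {V : Type*} (R : V → V → Prop) (S T : Set V) (l : List V) : Prop :=
  l.Chain' R ∧ l.Nodup ∧
    (∃ a ∈ S, l.head? = some a) ∧ (∃ b ∈ T, l.getLast? = some b) ∧
    ∀ v ∈ (l.drop 1).dropLast, v ∉ S ∪ T

/-- The length `d(S,T)` of a shortest directed `(S,T)`-path in the digraph `A`. -/
noncomputable def distST {V : Type*} (A : V → V → Prop) (S T : Set V) : ℕ :=
  sInf {m : ℕ | ∃ l : List V, IsSTPathList A S T l ∧ l.length = m + 1}

/-- The number of forward arcs of the oriented path listed by `l`. -/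
noncomputable def listForward {V : Type*} (A : V → V → Prop) (l : List V) : ℕ :=
  (l.zip l.tail).countP fun p => @decide (A p.1 p.2) (Classical.propDecidable _)

/-!
Since the strong components are acyclically ordered and `D` is locally semicomplete, an arc from
`u` to `w` forces every forward arc between different components lying between those of `u` and
`w`, and inserting vertices one at a time yields a directed Hamilton path `M`. Starting from the
first vertex of `M`, jump as far as one arc can climb in the ordering, always landing on the last
vertex in `M` of the component reached, until the last component is met; this greedy path `P`,
made to end at the last vertex of `M`, is a shortest `(C₁, C_ℓ)`-path.

Deleting one vertex does not disconnect `U(D)`, so for consecutive vertices `x`, `y`, `w` of `M`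
there is an arc jumping over `y`, and it forces `x → w` when `x` and `w` lie in different
components. Hence removing the interior of `P` from `M` leaves a directed path. Walking backwards
along `P` and then forwards along that path gives the cycle.
-/

open Relation

section Relations

variable {V : Type*} {R : V → V → Prop}

theorem exists_step_leaving {S : Set V} {x y : V} (h : ReflTransGen R x y) (hx : x ∈ S)
    (hy : y ∉ S) : ∃ a ∈ S, ∃ b ∉ S, R a b := by
  induction h with
  | refl => exact absurd hx hy
  | @tail b c _ hbc ih =>
    by_cases hb : b ∈ S
    · exact ⟨b, hb, c, hy, hbc⟩
    · exact ih hb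

theorem rel_or_rel_of_pairwise {l : List V} (hl : l.Pairwise R) {x y : V} (hx : x ∈ l)
    (hy : y ∈ l) (hxy : x ≠ y) : R x y ∨ R y x :=
  have : Std.Symm fun u v => R u v ∨ R v u := ⟨fun _ _ => Or.symm⟩
  have hor : l.Pairwise fun u v => R u v ∨ R v u := hl.imp Or.inl
  hor.forall hx hy hxy

theorem isChain_filter_of_bypass {p : V → Bool} :
    ∀ {l : List V}, l.IsChain R →
      (∀ x y z, [x, y, z] <:+: l → p y = false → p x = true ∧ R x z) → (l.filter p).IsChain R
  | [], _, _ => .nil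
  | [x], _, _ => by by_cases hx : p x <;> simp [hx]
  | x :: y :: l, hl, hby => by
    have ih : ((y :: l).filter p).IsChain R := isChain_filter_of_bypass hl.tail
      fun u v w huvw => hby u v w (huvw.trans (List.suffix_cons x _).isInfix)
    by_cases hx : p x
    · by_cases hy : p y
      · simpa [hx, hy, hl.rel] using ih
      · cases l with
        | nil => simp [hx, hy]
        | cons z l =>
          have hxz : R x z := (hby x y z ⟨[], l, rfl⟩ (by simpa using hy)).2
          by_cases hz : p z
          · simpa [hx, hy, hz, hxz] using ih
          · cases l with
            | nil => simp [hx, hy, hz]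
            | cons w l => exact absurd (hby y z w ⟨[x], l, rfl⟩ (by simpa using hz)).1 hy
    · simpa [hx] using ih

theorem exists_last_of_rank {α : Type*} [PartialOrder α] {c : V → α} {l : List V}
    (hnd : l.Nodup) (hle : l.Pairwise fun u v => c u ≤ c v) {x : V} (hx : x ∈ l) :
    ∃ b ∈ l, c b = c x ∧ ∀ y, [b, y] <:+: l → c b < c y := by
  induction l generalizing x with
  | nil => simp at hx
  | cons a l ih =>
    obtain ⟨hal, hnd⟩ := List.nodup_cons.1 hnd
    obtain ⟨hal_le, hle⟩ := List.pairwise_cons.1 hle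
    by_cases hex : ∃ x' ∈ l, c x' = c x
    · obtain ⟨x', hx', hxx'⟩ := hex
      obtain ⟨b, hbl, hbx, hb⟩ := ih hnd hle hx'
      refine ⟨b, .tail a hbl, hbx.trans hxx', fun y hby => hb y ?_⟩
      refine (List.infix_cons_iff.1 hby).resolve_left fun hpre => hal ?_
      exact (List.cons_prefix_cons.1 hpre).1 ▸ hbl
    · push Not at hex
      obtain rfl : x = a := (List.mem_cons.1 hx).resolve_right fun hxl => hex x hxl rfl
      refine ⟨x, hx, rfl, fun y hxy => ?_⟩
      have hyl : y ∈ l := (List.infix_cons_iff.1 hxy).elim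
        (fun hpre => (List.cons_prefix_cons.1 hpre).2.subset (by simp))
        fun hinf => absurd (hinf.subset (by simp)) hal
      exact (hal_le y hyl).lt_of_ne (hex y hyl).symm

end Relations

section HamiltonPath

variable {V : Type*} {A : V → V → Prop}

theorem LocallySemicomplete.flip (hls : LocallySemicomplete A) :
    LocallySemicomplete (flip A) := fun x u v huv =>
  ⟨fun hu hv => ((hls x u v huv).2 hu hv).symm, fun hu hv => ((hls x u v huv).1 hu hv).symm⟩

theorem LocallySemicomplete.exists_insert_of_adj_mem (hls : LocallySemicomplete A) {l : List V}
    (hl : l.IsChain A) {w x : V} (hw : w ∉ l) (hx : x ∈ l) (hwx : A w x) :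
    ∃ l' : List V, l'.IsChain A ∧ l'.Perm (w :: l) := by
  classical
  -- `w` goes right before its first out-neighbour `y` in `l`: the predecessor of `y` and `w` are
  -- both in-neighbours of `y`, hence adjacent, and `w` has no arc to that predecessor.
  obtain ⟨y, hy⟩ : ∃ y, l.find? (A w ·) = some y := by
    rw [← Option.isSome_iff_exists, List.find?_isSome]
    exact ⟨x, hx, by simpa using hwx⟩
  obtain ⟨hwy, s, t, rfl, hs⟩ := List.find?_eq_some_iff_append.1 hy
  simp only [decide_eq_true_eq, Bool.not_eq_true', decide_eq_false_iff_not] at hwy hs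
  refine ⟨s ++ w :: y :: t, ?_, List.perm_middle⟩
  have hpred : ∀ p ∈ s.getLast?, A p w := by
    intro p hp
    have hps : p ∈ s := List.mem_of_getLast? hp
    have hpy : A p y := (List.isChain_append.1 hl).2.2 p hp y rfl
    exact ((hls y p w (by grind)).2 hpy hwy).resolve_right (hs p hps)
  rw [List.isChain_append] at hl ⊢
  exact ⟨hl.1, hl.2.1.cons_cons hwy, by simpa using hpred⟩

theorem LocallySemicomplete.exists_insert_of_mem_adj (hls : LocallySemicomplete A) {l : List V}
    (hl : l.IsChain A) {w x : V} (hw : w ∉ l) (hx : x ∈ l) (hxw : A x w) :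
    ∃ l' : List V, l'.IsChain A ∧ l'.Perm (w :: l) := by
  obtain ⟨l', hl', hperm⟩ := hls.flip.exists_insert_of_adj_mem (List.isChain_reverse.2 hl)
    (by simpa using hw) (by simpa using hx) hxw
  exact ⟨l'.reverse, List.isChain_reverse.2 hl',
    (l'.reverse_perm.trans hperm).trans (l.reverse_perm.cons w)⟩

theorem LocallySemicomplete.exists_isChain_nodup_mem [Finite V] (hls : LocallySemicomplete A)
    (hconn : DigraphConnected A) : ∃ l : List V, l.IsChain A ∧ l.Nodup ∧ ∀ x, x ∈ l := by
  have := Fintype.ofFinite V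
  obtain ⟨l, ⟨hl, hnd⟩, hmax⟩ :=
    Set.Finite.exists_maximalFor' List.length {l : List V | l.IsChain A ∧ l.Nodup}
      ((Set.finite_Iic (Fintype.card V)).subset (Set.image_subset_iff.2 fun l hl =>
        hl.2.length_le_card)) ⟨[], by simp⟩
  refine ⟨l, hl, hnd, fun z => by_contra fun hz => ?_⟩
  obtain ⟨w, l', hw, hl', hperm⟩ :
      ∃ w, ∃ l' : List V, w ∉ l ∧ l'.IsChain A ∧ l'.Perm (w :: l) := by
    rcases l.eq_nil_or_concat with rfl | ⟨s, y, rfl⟩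
    · exact ⟨z, [z], by simp, by simp, .refl _⟩
    · obtain ⟨x, hx, w, hw, hxw | hwx⟩ :=
        exists_step_leaving (S := {v | v ∈ s.concat y}) (hconn y z) (by simp) hz
      · exact ⟨w, (hls.exists_insert_of_mem_adj hl hw hx hxw).imp fun _ => .intro hw⟩
      · exact ⟨w, (hls.exists_insert_of_adj_mem hl hw hx hwx).imp fun _ => .intro hw⟩
  have hlong := hmax ⟨hl', hperm.nodup_iff.2 (hnd.cons hw)⟩
  simp [hperm.length_eq] at hlong

end HamiltonPath

section Ranking

variable {V α : Type*} {A : V → V → Prop} {c : V → α}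

/-- A ranking of the vertices of `A` along which arcs never descend and for which every arc
`u → w` forces all arcs between vertices of different ranks in the interval `[c u, c w]`. The
acyclic ordering of the strong components of a locally semicomplete digraph is the intended
example. -/
structure IsConvexRanking [Preorder α] (A : V → V → Prop) (c : V → α) : Prop where
  le_of_adj {u v : V} : A u v → c u ≤ c v
  adj_of_between {u w x y : V} : A u w → c u ≤ c x → c x < c y → c y ≤ c w → A x y

theorem le_of_reflTransGen [Preorder α] (hmono : ∀ u v, A u v → c u ≤ c v) {u v : V}
    (huv : ReflTransGen A u v) : c u ≤ c v := by
  simpa only [reflTransGen_eq_self] using huv.lift (p := (· ≤ ·)) c hmono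

theorem LocallySemicomplete.adj_of_reflTransGen_head [Preorder α] (hls : LocallySemicomplete A)
    (hmono : ∀ u v, A u v → c u ≤ c v) {u w y : V} (huw : A u w) (hyw : ReflTransGen A y w)
    (hlt : c u < c y) : A u y := by
  induction hyw using ReflTransGen.head_induction_on with
  | refl => exact huw
  | @head p s hps _ ih =>
    have hus : A u s := ih (hlt.trans_le (hmono p s hps))
    exact ((hls s u p (ne_of_apply_ne c hlt.ne)).2 hus hps).resolve_right
      fun hpu => (hmono p u hpu).not_gt hlt

theorem LocallySemicomplete.adj_of_reflTransGen_tail [Preorder α] (hls : LocallySemicomplete A)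
    (hmono : ∀ u v, A u v → c u ≤ c v) {u x y : V} (huy : A u y) (hux : ReflTransGen A u x)
    (hlt : c x < c y) : A x y := by
  induction hux with
  | refl => exact huy
  | @tail s p _ hsp ih =>
    have hsy : A s y := ih ((hmono s p hsp).trans_lt hlt)
    exact ((hls s p y (ne_of_apply_ne c hlt.ne)).1 hsp hsy).resolve_right
      fun hyp => (hmono y p hyp).not_gt hlt

theorem LocallySemicomplete.isConvexRanking [Preorder α] (hls : LocallySemicomplete A)
    (hmono : ∀ u v, A u v → c u ≤ c v) (hreach : ∀ u v, c u ≤ c v → ReflTransGen A u v) :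
    IsConvexRanking A c where
  le_of_adj := hmono _ _
  adj_of_between {u w x y} huw hux hxy hyw :=
    have huy : A u y :=
      hls.adj_of_reflTransGen_head hmono huw (hreach y w hyw) (hux.trans_lt hxy)
    hls.adj_of_reflTransGen_tail hmono huy (hreach u x hux) hxy

theorem reflTransGen_or_of_isChain {l : List V} (hl : l.IsChain A) {u v : V} (hu : u ∈ l)
    (hv : v ∈ l) : ReflTransGen A u v ∨ ReflTransGen A v u := by
  rcases eq_or_ne u v with rfl | huv
  · exact .inl .refl
  · exact rel_or_rel_of_pairwise (hl.imp fun _ _ => ReflTransGen.single).pairwise hu hv huv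

theorem IsAcyclicOrdering.reflTransGen_of_le {ℓ : ℕ} {comp : V → Fin ℓ}
    (hord : IsAcyclicOrdering A comp) {u v : V}
    (hor : ReflTransGen A u v ∨ ReflTransGen A v u) (hle : comp u ≤ comp v) :
    ReflTransGen A u v := by
  obtain ⟨-, hcomp, hmono⟩ := hord
  exact hor.elim id fun hvu => ((hcomp u v).1 (hle.antisymm (le_of_reflTransGen hmono hvu))).1

theorem IsAcyclicOrdering.exists_lt_of_not_strong {ℓ : ℕ} {comp : V → Fin ℓ}
    (hord : IsAcyclicOrdering A comp) (hns : ¬ DigraphStrong A) : ∃ u v, comp u < comp v := by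
  by_contra! h
  exact hns fun u v => ((hord.2.1 u v).1 ((h v u).antisymm (h u v))).1

theorem IsConvexRanking.pairwise_le [Preorder α] (hc : IsConvexRanking A c) {l : List V}
    (hl : l.IsChain A) : l.Pairwise fun u v => c u ≤ c v :=
  have : Trans (fun u v : V => c u ≤ c v) (fun u v => c u ≤ c v) (fun u v => c u ≤ c v) :=
    ⟨le_trans⟩
  (hl.imp fun _ _ => hc.le_of_adj).pairwise

theorem IsConvexRanking.exists_eq_cons_append [Preorder α] (hc : IsConvexRanking A c)
    {l : List V} (hl : l.IsChain A) (hmem : ∀ x, x ∈ l) (hlt : ∃ u v, c u < c v) :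
    ∃ a t z, l = a :: (t ++ [z]) ∧ c a < c z ∧ ∀ x, c a ≤ c x ∧ c x ≤ c z := by
  have hle := hc.pairwise_le hl
  obtain ⟨u, v, huv⟩ := hlt
  rcases l with _ | ⟨a, l⟩
  · simpa using hmem u
  rcases l.eq_nil_or_concat' with rfl | ⟨t, z, rfl⟩
  · simp_all
  · have hends (x : V) : c a ≤ c x ∧ c x ≤ c z := by
      have hx := hmem x
      rw [List.pairwise_cons, List.pairwise_append] at hle
      grind
    exact ⟨a, t, z, rfl, ((hends u).1.trans_lt huv).trans_le (hends v).2, hends⟩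

theorem IsConvexRanking.adj_of_infix [PartialOrder α] (hc : IsConvexRanking A c) {l : List V}
    (hl : l.IsChain A) (hnd : l.Nodup) (hmem : ∀ v, v ∈ l) {x y z : V} (hxyz : [x, y, z] <:+: l)
    (hconn : ∀ u v, u ≠ y → v ≠ y →
      ReflTransGen (fun a b => (A a b ∨ A b a) ∧ a ≠ y ∧ b ≠ y) u v)
    (hlt : c x < c z) : A x z := by
  obtain ⟨s, t, rfl⟩ := hxyz
  have hsorted := hc.pairwise_le hl
  have hxz := hconn x z (by grind) (by grind)
  obtain ⟨a, ha, b, hb, hab, -, hby⟩ :=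
    exists_step_leaving (S := {v | v ∈ s ++ [x]}) hxz (by simp) (by grind)
  have hax : c a ≤ c x := by
    have : a ∈ s ++ [x] := ha
    grind
  have hzb : c z ≤ c b := by
    have : b ∉ s ++ [x] := hb
    have := hmem b
    grind
  rcases hab with hab | hba
  · exact hc.adj_of_between hab hax hlt hzb
  · exact absurd (hc.le_of_adj hba) ((hax.trans_lt hlt).trans_le hzb).not_ge

end Ranking

section Greedy

variable {V α : Type*} [LinearOrder α] {A : V → V → Prop} {c : V → α}

/-- `y` has a larger rank than `x`, and no arc that leaves a vertex of rank at most `c x` ends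
at a rank above `c y`. -/
def ReachCappedBy (A : V → V → Prop) (c : V → α) (x y : V) : Prop :=
  c x < c y ∧ ∀ u w, c u ≤ c x → A u w → c w ≤ c y

instance : IsTrans V (ReachCappedBy A c) where
  trans _ _ _ hxy hyz :=
    ⟨hxy.1.trans hyz.1, fun u w hu huw => (hxy.2 u w hu huw).trans hyz.1.le⟩

/-- `P` lists the vertices of a directed path of `A` each of whose arcs climbs as far as
possible in the ranking `c`. -/
structure IsGreedyPath (A : V → V → Prop) (c : V → α) (P : List V) : Prop where
  isChain : P.IsChain A
  capped : P.IsChain (ReachCappedBy A c)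

theorem IsConvexRanking.exists_reachCappedBy [WellFoundedGT α] (hc : IsConvexRanking A c)
    {S : Set V} (hS : ∀ x, ∃ b ∈ S, c b = c x) {a z : V} (haz : ReflTransGen A a z)
    (hlt : c a < c z) : ∃ b ∈ S, A a b ∧ ReachCappedBy A c a b := by
  obtain ⟨u, hu, w, hw, huw⟩ := exists_step_leaving (S := {x | c x ≤ c a}) haz le_rfl hlt.not_ge
  obtain ⟨m, ⟨⟨x, hx, hxm⟩, ham⟩, hmax⟩ := exists_maximalFor_of_wellFoundedGT
    (fun y => (∃ x, c x ≤ c a ∧ A x y) ∧ c a < c y) c ⟨w, ⟨u, hu, huw⟩, not_le.1 hw⟩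
  obtain ⟨b, hbS, hbm⟩ := hS m
  refine ⟨b, hbS, hc.adj_of_between hxm hx (hbm ▸ ham) hbm.le, hbm ▸ ham, fun u w hu huw => ?_⟩
  by_contra! hbw
  exact hbw.not_ge (hbm ▸ hmax ⟨⟨u, hu, huw⟩, (hbm ▸ ham).trans hbw⟩ (hbm ▸ hbw.le))

theorem IsConvexRanking.exists_isGreedyPath [WellFoundedGT α] (hc : IsConvexRanking A c)
    {S : Set V} (hS : ∀ x, ∃ b ∈ S, c b = c x) {z : V} (hz : ∀ x, ReflTransGen A x z) (a : V)
    (hlt : c a < c z) :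
    ∃ q : List V, IsGreedyPath A c (a :: (q ++ [z])) ∧ ∀ b ∈ q, b ∈ S := by
  induction a using (InvImage.wf c wellFounded_gt).induction with
  | _ a ih =>
  obtain ⟨b, hbS, hab, hcap⟩ := hc.exists_reachCappedBy hS (hz a) hlt
  rcases (le_of_reflTransGen (fun _ _ h => hc.le_of_adj h) (hz b)).lt_or_eq with hbz | hbz
  · obtain ⟨q, hq, hqS⟩ := ih b hcap.1 hbz
    exact ⟨b :: q, ⟨hq.isChain.cons_cons hab, hq.capped.cons_cons hcap⟩, by simpa [hbS] using hqS⟩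
  · have haz : A a z := hc.adj_of_between hab le_rfl hlt hbz.ge
    exact ⟨[], ⟨by simpa using haz, by simpa [ReachCappedBy, hbz] using hcap⟩, by simp⟩

theorem length_le_of_isChain_reachCappedBy {y : V} :
    ∀ {P W : List V} {a x : V}, (a :: P).IsChain (ReachCappedBy A c) → (x :: W).IsChain A →
      c x ≤ c a → y ∈ x :: W → (∀ b ∈ a :: P, c b ≤ c y) → P.length ≤ W.length
  | [], _, _, _, _, _, _, _, _ => Nat.zero_le _
  | b :: P, W, a, x, hP, hW, hxa, hy, hle => by
    have hyx : y ≠ x := by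
      rintro rfl
      exact (hP.rel.1.trans_le (hle b (by simp))).not_ge hxa
    have hyW : y ∈ W := List.mem_of_ne_of_mem hyx hy
    match W, hW, hyW with
    | x' :: W, hW, hyW =>
      exact Nat.succ_le_succ (length_le_of_isChain_reachCappedBy hP.tail hW.tail
        (hP.rel.2 x x' hxa hW.rel) hyW fun b' hb' => hle b' (.tail a hb'))

variable {a z : V} {q : List V}

theorem IsGreedyPath.lt_and_lt (hP : IsGreedyPath A c (a :: (q ++ [z]))) :
    c a < c z ∧ ∀ b ∈ q, c a < c b ∧ c b < c z := by
  have hsorted := hP.capped.pairwise.imp fun h => h.1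
  rw [List.pairwise_cons, List.pairwise_append] at hsorted
  grind

theorem IsGreedyPath.nodup (hP : IsGreedyPath A c (a :: (q ++ [z]))) : (a :: (q ++ [z])).Nodup :=
  hP.capped.pairwise.imp fun h => ne_of_apply_ne c h.1.ne

theorem IsGreedyPath.length_le (hP : IsGreedyPath A c (a :: (q ++ [z]))) {x y : V} {W : List V}
    (hW : (x :: W).IsChain A) (hx : c x ≤ c a) (hyW : y ∈ x :: W) (hy : c z ≤ c y) :
    q.length + 1 ≤ W.length := by
  have hlt := hP.lt_and_lt
  simpa using length_le_of_isChain_reachCappedBy hP.capped hW hx hyW (by grind)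

theorem IsGreedyPath.isSTPathList (hP : IsGreedyPath A c (a :: (q ++ [z]))) :
    IsSTPathList A {v | c v = c a} {v | c v = c z} (a :: (q ++ [z])) := by
  refine ⟨hP.isChain, hP.nodup, ⟨a, rfl, rfl⟩, ⟨z, rfl, by simp [List.getLast?_cons]⟩, ?_⟩
  intro b hb
  obtain ⟨hab, hbz⟩ := hP.lt_and_lt.2 b (by simpa using hb)
  exact not_or.2 ⟨hab.ne', hbz.ne⟩

theorem IsGreedyPath.distST_eq (hP : IsGreedyPath A c (a :: (q ++ [z]))) :
    distST A {v | c v = c a} {v | c v = c z} = q.length + 1 := by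
  have hmem : q.length + 1 ∈ {m : ℕ | ∃ l : List V,
      IsSTPathList A {v | c v = c a} {v | c v = c z} l ∧ l.length = m + 1} :=
    ⟨_, hP.isSTPathList, by simp⟩
  refine (Nat.sInf_le hmem).antisymm (le_csInf ⟨_, hmem⟩ ?_)
  rintro m ⟨_ | ⟨x, W⟩, ⟨hW, -, ⟨x', hx', hhead⟩, ⟨y, hy, hlast⟩, -⟩, hlen⟩
  · simp at hhead
  · obtain rfl : x = x' := by simpa using hhead
    obtain rfl : W.length = m := by simpa using hlen
    exact hP.length_le hW hx'.le (List.mem_of_getLast? hlast) hy.ge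

theorem isChain_filter_notMem [DecidableEq V] {l : List V} (hl : l.IsChain A)
    (hle : l.Pairwise fun u v => c u ≤ c v) (hq : q.IsChain (ReachCappedBy A c))
    (hlast : ∀ b ∈ q, ∀ y, [b, y] <:+: l → c b < c y)
    (hby : ∀ x y w, [x, y, w] <:+: l → c x < c w → A x w) :
    (l.filter (· ∉ q)).IsChain A := by
  refine isChain_filter_of_bypass hl fun x y w hxyw hyq => ?_
  replace hyq : y ∈ q := by simpa using hyq
  have hxy : c x ≤ c y := by
    have := hle.sublist hxyw.sublist
    simp_all
  have hyw : c y < c w := hlast y hyq w ((List.suffix_cons x _).isInfix.trans hxyw)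
  have hxw : A x w := hby x y w hxyw (hxy.trans_lt hyw)
  -- If `x` were on the greedy path too, the bypassing arc `x → w` would climb above the next
  -- greedy vertex `y`, so consecutive vertices of `l` are never both deleted.
  refine ⟨decide_eq_true fun hxq => ?_, hxw⟩
  have hxy_lt : c x < c y := hlast x hxq y ((List.prefix_append [x, y] [w]).isInfix.trans hxyw)
  have hcap : ReachCappedBy A c x y :=
    (rel_or_rel_of_pairwise hq.pairwise hxq hyq (ne_of_apply_ne c hxy_lt.ne)).resolve_right
      fun h => h.1.not_gt hxy_lt
  exact (hcap.2 x w le_rfl hxw).not_gt hyw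

theorem IsConvexRanking.exists_isGreedyPath_isChain_compl [WellFoundedGT α]
    (hc : IsConvexRanking A c) {t : List V} (hM : (a :: (t ++ [z])).IsChain A)
    (hnd : (a :: (t ++ [z])).Nodup) (hmem : ∀ x, x ∈ a :: (t ++ [z])) (hlt : c a < c z)
    (hby : ∀ x y w, [x, y, w] <:+: a :: (t ++ [z]) → c x < c w → A x w) :
    ∃ q r : List V, IsGreedyPath A c (a :: (q ++ [z])) ∧ (a :: (r ++ [z])).IsChain A ∧
      (q ++ r).Perm t := by
  classical
  have hle := hc.pairwise_le hM
  have hreach (x : V) : ReflTransGen A x z := by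
    have hpair := (hM.imp fun _ _ => ReflTransGen.single).pairwise
    rw [← List.cons_append, List.pairwise_append] at hpair
    have hx := hmem x
    grind
  obtain ⟨q, hP, hlast⟩ := hc.exists_isGreedyPath
    (S := {b | ∀ y, [b, y] <:+: a :: (t ++ [z]) → c b < c y})
    (fun x => (exists_last_of_rank hnd hle (hmem x)).imp fun b hb => ⟨hb.2.2, hb.2.1⟩)
    hreach a hlt
  have hrank := hP.lt_and_lt.2
  have ha : a ∉ q := fun haq => (hrank a haq).1.false
  have hz : z ∉ q := fun hzq => (hrank z hzq).2.false
  have hcompl := isChain_filter_notMem hM hle (q := q) (hP.capped.infix ⟨[a], [z], by simp⟩)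
    hlast hby
  refine ⟨q, t.filter (· ∉ q), hP, by simpa [ha, hz] using hcompl, ?_⟩
  have hqt : q.Perm (t.filter (· ∈ q)) := by
    refine (List.perm_ext_iff_of_nodup ?_ ?_).2 fun b => ?_
    · exact hP.nodup.sublist (by simp)
    · exact (hnd.sublist (by simp)).filter _
    · have := hmem b
      grind
  refine (hqt.append_right _).trans ?_
  simpa using t.filter_append_perm (· ∈ q)

end Greedy

section Cycle

theorem max_card_forward_backward {n k : ℕ} [NeZero n] (hk : 2 * k ≤ n) {o : ZMod n → Bool}
    (ho : ∀ i, o i = false ↔ ∃ m < k, i = (m : ℕ)) :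
    max (Nat.card {i // o i = true}) (Nat.card {i // o i = false}) = n - k := by
  have hback : {i | o i = false}.ncard = k := by
    have himage : {i | o i = false} = (fun m : ℕ => (m : ZMod n)) '' Set.Iio k := by
      ext i
      simp [ho, eq_comm]
    have hinj : Set.InjOn (fun m : ℕ => (m : ZMod n)) (Set.Iio k) := fun a ha b hb hab => by
      have hlt {m : ℕ} (hm : m < k) : m < n := by omega
      simpa only [ZMod.val_natCast_of_lt (hlt ha), ZMod.val_natCast_of_lt (hlt hb)] using
        congrArg ZMod.val hab
    rw [himage, hinj.ncard_image, Set.ncard_Iio_nat]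
  have hcompl : {i | o i = false}ᶜ = {i | o i = true} := by
    ext i
    simp
  have hsum := Set.ncard_add_ncard_compl {i | o i = false}
  rw [hcompl, hback, Nat.card_zmod] at hsum
  change max {i | o i = true}.ncard {i | o i = false}.ncard = n - k
  omega

variable {V : Type*}

theorem perm_reverse_append_of_perm {a z : V} {q r t : List V} (hqr : (q ++ r).Perm t) :
    (z :: (q.reverse ++ a :: r)).Perm (a :: (t ++ [z])) :=
  calc
    (z :: (q.reverse ++ a :: r)).Perm (z :: a :: (q.reverse ++ r)) := List.perm_middle.cons z
    List.Perm _ (a :: z :: (q.reverse ++ r)) := .swap a z _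
    List.Perm _ (a :: z :: t) := (((q.reverse_perm.append_right r).trans hqr).cons z).cons a
    List.Perm _ (a :: (t ++ [z])) := (List.perm_append_singleton z t).symm.cons a

variable [Fintype V] {A : V → V → Prop}

theorem card_eq_length_of_nodup_of_forall_mem {l : List V} (hnd : l.Nodup) (hmem : ∀ x, x ∈ l) :
    Fintype.card V = l.length := by
  classical
  simpa using Fintype.card_congr (hnd.getEquivOfForallMemList l hmem).symm

theorem exists_zmodEquiv_getElem {x : V} {l : List V} (hnd : (x :: l).Nodup)
    (hmem : ∀ y, y ∈ x :: l) :
    ∃ e : ZMod (Fintype.card V) ≃ V,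
      ∀ (k : ℕ) (hk : k < (x :: l ++ [x]).length), e k = (x :: l ++ [x])[k] := by
  have hcard := card_eq_length_of_nodup_of_forall_mem hnd hmem
  have : NeZero (Fintype.card V) := ⟨by simp [hcard]⟩
  have hval (i : ZMod (Fintype.card V)) : i.val < (x :: l).length := hcard ▸ i.val_lt
  have hinj : Function.Injective fun i : ZMod (Fintype.card V) => (x :: l)[i.val]'(hval i) :=
    fun i j hij => ZMod.val_injective _ (hnd.getElem_inj_iff.1 hij)
  refine ⟨.ofBijective _ ((Fintype.bijective_iff_injective_and_card _).2 ⟨hinj, ZMod.card _⟩),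
    fun k hk => ?_⟩
  simp only [Equiv.ofBijective_apply, ZMod.val_natCast]
  rcases (show k ≤ Fintype.card V by grind).lt_or_eq with hlt | rfl
  · simp only [Nat.mod_eq_of_lt hlt]
    rw [List.getElem_append_left]
  · simp [hcard]

theorem exists_hamiltonOrientedCycle {a z : V} {q r : List V}
    (hP : (a :: (q ++ [z])).IsChain A) (hR : (a :: (r ++ [z])).IsChain A)
    (hnd : (z :: (q.reverse ++ a :: r)).Nodup) (hmem : ∀ x, x ∈ z :: (q.reverse ++ a :: r)) :
    ∃ (e : ZMod (Fintype.card V) ≃ V) (o : ZMod (Fintype.card V) → Bool),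
      (∀ i, if o i then A (e i) (e (i + 1)) else A (e (i + 1)) (e i)) ∧
      (∀ m : Fin (a :: (q ++ [z])).length,
        e (m : ℕ) = (a :: (q ++ [z])).get ⟨(a :: (q ++ [z])).length - 1 - m, by grind⟩) ∧
      ∀ i, o i = false ↔ ∃ m < q.length + 1, i = (m : ℕ) := by
  obtain ⟨e, he⟩ := exists_zmodEquiv_getElem hnd hmem
  have hcard : Fintype.card V = q.length + r.length + 2 := by
    simpa +arith using card_eq_length_of_nodup_of_forall_mem hnd hmem
  have : NeZero (Fintype.card V) := ⟨by omega⟩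
  refine ⟨e, fun i => decide (q.length + 1 ≤ i.val), fun i => ?_, fun m => ?_, fun i => ?_⟩
  · have hi := i.val_lt
    have hlast : i.val + 1 < (z :: (q.reverse ++ a :: r) ++ [z]).length := by
      grind
    have hfst : e i = (z :: (q.reverse ++ a :: r) ++ [z])[i.val] := by
      rw [← he, ZMod.natCast_zmod_val]
    have hsnd : e (i + 1) = (z :: (q.reverse ++ a :: r) ++ [z])[i.val + 1] := by
      rw [← he, Nat.cast_succ, ZMod.natCast_zmod_val]
    simp only [hfst, hsnd, decide_eq_true_iff]
    split_ifs with h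
    · have := List.isChain_iff_getElem.1 hR (i.val - (q.length + 1)) (by grind)
      grind
    · have := List.isChain_iff_getElem.1 (List.isChain_reverse.2 hP) i.val (by grind)
      grind
  · rw [he m (by grind)]
    grind
  · rw [decide_eq_false_iff_not, not_le]
    refine ⟨fun h => ⟨i.val, h, by simp⟩, ?_⟩
    rintro ⟨m, hm, rfl⟩
    rwa [ZMod.val_natCast_of_lt (by omega)]

end Cycle

/-- let `D` be a connected non-strong locally semicomplete digraph on
`n ≥ 3` vertices whose underlying graph is 2-connected, with acyclic ordering of strong
components `C₁, …, C_ℓ`. Then `D` has a Hamilton oriented cycle `R` (given by the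
vertex listing `e` together with the choice `o` of arc directions) containing a
shortest directed `(C₁, C_ℓ)`-path `l` as a subpath, whose backward arcs are exactly
the arcs of `l`; in particular `σ_max(R) = n - d(C₁, C_ℓ)`. -/
theorem stmt15 {V : Type*} [Fintype V] (hn : 3 ≤ Fintype.card V)
    (A : V → V → Prop) (hls : LocallySemicomplete A) (hconn : DigraphConnected A)
    (hns : ¬ DigraphStrong A) {ℓ : ℕ} (comp : V → Fin ℓ)
    (hord : IsAcyclicOrdering A comp)
    (c1 cl : Fin ℓ) (hc1 : ∀ d, c1 ≤ d) (hcl : ∀ d, d ≤ cl)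
    (h2conn : ∀ w u v : V, u ≠ w → v ≠ w →
      Relation.ReflTransGen (fun a b => (A a b ∨ A b a) ∧ a ≠ w ∧ b ≠ w) u v) :
    ∃ (e : ZMod (Fintype.card V) ≃ V) (o : ZMod (Fintype.card V) → Bool),
      (∀ i, if o i then A (e i) (e (i + 1)) else A (e (i + 1)) (e i)) ∧
      ∃ l : List V,
        IsSTPathList A {v | comp v = c1} {v | comp v = cl} l ∧
        l.length = distST A {v | comp v = c1} {v | comp v = cl} + 1 ∧
        ∃ j : ZMod (Fintype.card V),
          (∀ m : Fin l.length, e (j + (m : ℕ)) =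
            l.get ⟨l.length - 1 - (m : ℕ), by have := m.isLt; omega⟩) ∧
          (∀ i, o i = false ↔ ∃ m : ℕ, m + 1 < l.length ∧ i = j + (m : ℕ)) ∧
          max (Nat.card {i : ZMod (Fintype.card V) // o i = true})
              (Nat.card {i : ZMod (Fintype.card V) // o i = false}) =
            Fintype.card V - distST A {v | comp v = c1} {v | comp v = cl} := by
  obtain ⟨M, hM, hnd, hmem⟩ := hls.exists_isChain_nodup_mem hconn
  have hc : IsConvexRanking A comp := hls.isConvexRanking hord.2.2 fun u v =>
    hord.reflTransGen_of_le (reflTransGen_or_of_isChain hM (hmem u) (hmem v))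
  obtain ⟨a, t, z, rfl, hlt, hends⟩ :=
    hc.exists_eq_cons_append hM hmem (hord.exists_lt_of_not_strong hns)
  obtain ⟨q, r, hP, hR, hqr⟩ := hc.exists_isGreedyPath_isChain_compl hM hnd hmem hlt
    fun x y w hxyw => hc.adj_of_infix hM hnd hmem hxyw (h2conn y)
  have hperm := perm_reverse_append_of_perm (a := a) (z := z) hqr
  have hnd' := hperm.nodup_iff.2 hnd
  have hmem' (x : V) : x ∈ z :: (q.reverse ++ a :: r) := hperm.mem_iff.2 (hmem x)
  obtain ⟨e, o, harc, hpath, hback⟩ := exists_hamiltonOrientedCycle hP.isChain hR hnd' hmem'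
  have hbot : ∀ d, comp a ≤ d := hord.1.forall.2 fun x => (hends x).1
  have htop : ∀ d, d ≤ comp z := hord.1.forall.2 fun x => (hends x).2
  obtain rfl : comp a = c1 := (hbot c1).antisymm (hc1 _)
  obtain rfl : comp z = cl := (hcl _).antisymm (htop cl)
  refine ⟨e, o, harc, _, hP.isSTPathList, by simp [hP.distST_eq], 0,
    fun m => by simpa using hpath m, fun i => by simp [hback], ?_⟩
  have : NeZero (Fintype.card V) := ⟨by omega⟩
  have hlen := hP.length_le hR le_rfl (by simp) le_rfl
  have hcard := card_eq_length_of_nodup_of_forall_mem hnd' hmem'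
  exact hP.distST_eq ▸ max_card_forward_backward (by grind) hback
end
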